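/- arXiv:1707.01291 — 4 statements merged into one kernel-verified Lean document; each statement's English description precedes it below -/
import Mathlib

section
/- Let A be a commutative unital complex Banach algebra. Suppose T : [0,1] → (A →L[ℂ] A) is a family of continuous unital ℂ-algebra endomorphisms of A such that: (i) for every a ∈ A, the map t ↦ T_t(a) from [0,1] to A is continuous (in the norm topology of A); (ii) T_0 is the identity map of A; (iii) there exists a character χ in the character space of A such that T_1(a) = χ(a)·1 for all a ∈ A. Then the character space of A is a contractible topological space. -/
/-!
A continuous character `φ` of a seminormed algebra satisfies
`‖φ a‖ ^ n = ‖φ (a ^ n)‖ ≤ C * ‖a‖ ^ n` for all `n ≥ 1`, so letting `n → ∞` gives `‖φ a‖ ≤ ‖a‖`.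
The characters are thus uniformly Lipschitz, which makes `(a, φ) ↦ φ a` jointly continuous, and
`(t, φ) ↦ φ ∘ T t` is a homotopy from the identity to the constant map `χ`.
-/

open WeakDual

section Comap

variable {𝕜 A B : Type*} [CommRing 𝕜] [NoZeroDivisors 𝕜] [Nontrivial 𝕜] [TopologicalSpace 𝕜]
  [ContinuousAdd 𝕜] [ContinuousConstSMul 𝕜 𝕜]
  [Semiring A] [TopologicalSpace A] [Algebra 𝕜 A] [Semiring B] [TopologicalSpace B] [Algebra 𝕜 B]

theorem comp_mem_characterSpace (φ : characterSpace 𝕜 B) (f : A →A[𝕜] B) :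
    (CharacterSpace.toCLM φ).comp f.toContinuousLinearMap ∈ characterSpace 𝕜 A := by
  rw [CharacterSpace.eq_set_map_one_map_mul]
  exact ⟨(congrArg φ (map_one f)).trans (map_one φ),
    fun a b => (congrArg φ (map_mul f a b)).trans (map_mul φ _ _)⟩

/-- The map `φ ↦ φ ∘ f` of character spaces induced by a continuous unital algebra homomorphism
`f`, bundled as a weak-* continuous map. -/
noncomputable def characterSpaceComap (f : A →A[𝕜] B) :
    C(characterSpace 𝕜 B, characterSpace 𝕜 A) where
  toFun φ := ⟨(CharacterSpace.toCLM φ).comp f.toContinuousLinearMap, comp_mem_characterSpace φ f⟩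
  continuous_toFun := Continuous.subtype_mk (continuous_of_continuous_eval fun a =>
    (eval_continuous (f a)).comp continuous_subtype_val) _

@[simp]
theorem characterSpaceComap_apply (f : A →A[𝕜] B) (φ : characterSpace 𝕜 B) (a : A) :
    characterSpaceComap f φ a = φ (f a) :=
  rfl

theorem characterSpaceComap_id :
    characterSpaceComap (ContinuousAlgHom.id 𝕜 A) = ContinuousMap.id (characterSpace 𝕜 A) :=
  rfl

theorem characterSpaceComap_eq_const {f : A →A[𝕜] B} {χ : characterSpace 𝕜 A}
    (hf : ∀ a, f a = χ a • (1 : B)) :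
    characterSpaceComap f = ContinuousMap.const (characterSpace 𝕜 B) χ := by
  ext φ a
  calc characterSpaceComap f φ a = φ (f a) := characterSpaceComap_apply f φ a
    _ = χ a • φ 1 := by rw [hf, map_smul]
    _ = χ a := by rw [map_one, smul_eq_mul, mul_one]

end Comap

section Seminormed

variable {𝕜 A B : Type*} [NontriviallyNormedField 𝕜] [Semiring A] [TopologicalSpace A]
  [Algebra 𝕜 A] [SeminormedRing B] [NormedAlgebra 𝕜 B]

theorem norm_characterSpace_apply_le (φ : characterSpace 𝕜 B) (b : B) : ‖φ b‖ ≤ ‖b‖ :=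
  contraction_of_isPowMul (fun z _ _ => norm_pow z _) (f := (φ : B →+* 𝕜))
    (CharacterSpace.toCLM φ).bound b

theorem lipschitzWith_one_characterSpace (φ : characterSpace 𝕜 B) : LipschitzWith 1 φ :=
  AddMonoidHomClass.lipschitz_of_bound_nnnorm φ 1 fun b =>
    (norm_characterSpace_apply_le φ b).trans_eq (one_mul ‖b‖).symm

theorem continuous_characterSpace_eval :
    Continuous fun p : B × characterSpace 𝕜 B => p.2 p.1 :=
  continuous_prod_of_continuous_lipschitzWith _ 1
    (fun b => (eval_continuous b).comp continuous_subtype_val) lipschitzWith_one_characterSpace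

theorem continuous_characterSpaceComap_uncurry {X : Type*} [TopologicalSpace X]
    {T : X → (A →A[𝕜] B)} (hT : ∀ a, Continuous fun x => T x a) :
    Continuous fun p : X × characterSpace 𝕜 B => characterSpaceComap (T p.1) p.2 :=
  Continuous.subtype_mk (continuous_of_continuous_eval fun a =>
    continuous_characterSpace_eval.comp (((hT a).comp continuous_fst).prodMk continuous_snd)) _

theorem characterSpaceComap_homotopic {T : unitInterval → (A →A[𝕜] B)}
    (hT : ∀ a, Continuous fun t => T t a) :
    (characterSpaceComap (T 0)).Homotopic (characterSpaceComap (T 1)) :=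
  ⟨{ toFun p := characterSpaceComap (T p.1) p.2
     continuous_toFun := continuous_characterSpaceComap_uncurry hT
     map_zero_left _ := rfl
     map_one_left _ := rfl }⟩

end Seminormed

theorem characterSpace_contractible_of_homotopy_general
    {𝕜 A : Type*} [NontriviallyNormedField 𝕜] [SeminormedRing A] [NormedAlgebra 𝕜 A]
    (T : unitInterval → (A →A[𝕜] A)) (hTcont : ∀ a, Continuous fun t => T t a)
    (hT0 : T 0 = ContinuousAlgHom.id 𝕜 A)
    (hT1 : ∃ χ : characterSpace 𝕜 A, ∀ a, T 1 a = χ a • (1 : A)) :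
    ContractibleSpace (characterSpace 𝕜 A) := by
  obtain ⟨χ, hχ⟩ := hT1
  have id_homotopic_const := characterSpaceComap_homotopic hTcont
  rw [hT0, characterSpaceComap_id, characterSpaceComap_eq_const hχ] at id_homotopic_const
  exact (contractible_iff_id_nullhomotopic _).mpr ⟨χ, id_homotopic_const⟩

/-- If a commutative unital complex Banach algebra `A` admits a pointwise-norm-continuous
family `T : [0,1] → (A →L[ℂ] A)` of continuous unital algebra endomorphisms with `T 0 = id`
and `T 1 = χ(·) • 1` for some character `χ`, then the character space of `A` is contractible. -/
theorem characterSpace_contractible_of_homotopy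
    {A : Type*} [NormedCommRing A] [NormedAlgebra ℂ A] [CompleteSpace A]
    (T : unitInterval → (A →L[ℂ] A))
    (hTmul : ∀ t (a b : A), T t (a * b) = T t a * T t b)
    (hTone : ∀ t, T t 1 = 1)
    (hTcont : ∀ a : A, Continuous fun t => T t a)
    (hT0 : T 0 = ContinuousLinearMap.id ℂ A)
    (hT1 : ∃ χ : WeakDual.characterSpace ℂ A, ∀ a : A, T 1 a = χ a • (1 : A)) :
    ContractibleSpace (WeakDual.characterSpace ℂ A) :=
  characterSpace_contractible_of_homotopy_general
    (fun t => ⟨AlgHom.ofLinearMap (T t) (hTone t) (hTmul t), (T t).cont⟩) hTcont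
    (ContinuousAlgHom.ext fun a => (DFunLike.congr_fun hT0 a :)) hT1
end

section
/- Let S be a commutative monoid with identity e. Suppose the indicator function 1_e of the set {e} belongs to S*_1, and suppose there exists a continuous path γ : [0,1] → S*_1 with γ(0) equal to the constant function 1 and γ(1) = 1_e. Then the space S*_1 is path-connected. -/
/-!
Semicharacters form a topological monoid under pointwise multiplication, with unit the constant
function `1`. The indicator of `{e}` is absorbing because every semicharacter takes the value `1`
at `e`, so multiplying a path from the unit to it by `ρ` contracts `ρ` to the indicator.
-/

/-- The space `S*_1` of bounded nonnegative semicharacters of `S`, with values in an ordered monoid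
with zero `R` in place of `ℝ`. It is encoded as a submonoid of `S → R`, from which it inherits
pointwise multiplication and the topology of pointwise convergence. -/
def semicharSpace (S R : Type*) [MulOneClass S] [CommMonoidWithZero R] [Preorder R]
    [ZeroLEOneClass R] [PosMulMono R] : Submonoid (S → R) where
  carrier := {ρ | ρ 1 = 1 ∧ (∀ x y : S, ρ (x * y) = ρ x * ρ y) ∧ ∀ s : S, ρ s ∈ Set.Icc (0 : R) 1}
  one_mem' := by simp
  mul_mem' := by
    rintro ρ σ ⟨ρ_one, ρ_mul, ρ_mem⟩ ⟨σ_one, σ_mul, σ_mem⟩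
    refine ⟨by simp [ρ_one, σ_one], fun x y => ?_, fun s => ⟨?_, ?_⟩⟩
    · simp only [Pi.mul_apply, ρ_mul, σ_mul, mul_mul_mul_comm]
    · exact mul_nonneg (ρ_mem s).1 (σ_mem s).1
    · exact (mul_le_of_le_one_right (ρ_mem s).1 (σ_mem s).2).trans (ρ_mem s).2

theorem pathConnectedSpace_of_joined_one_of_forall_mul_eq {M : Type*} [MulOneClass M]
    [TopologicalSpace M] [SeparatelyContinuousMul M] {z : M} (h_joined : Joined 1 z)
    (h_absorbing : ∀ x, x * z = z) : PathConnectedSpace M := by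
  have joined_absorbing (x : M) : Joined x z := by
    simpa only [mul_one, h_absorbing] using h_joined.map (continuous_const_mul x)
  exact ⟨⟨z⟩, fun x y => (joined_absorbing x).trans (joined_absorbing y).symm⟩

theorem mul_indicator_one_of_eqOn_one {α R : Type*} [MulZeroOneClass R] {f : α → R} {s : Set α}
    (hf : Set.EqOn f 1 s) : f * s.indicator 1 = s.indicator 1 := by
  ext a
  by_cases ha : a ∈ s
  · simp [ha, hf ha]
  · simp [ha]

theorem semicharSpace_pathConnected_of_path_general {S R : Type*} [MulOneClass S]
    [CommMonoidWithZero R] [Preorder R] [ZeroLEOneClass R] [PosMulMono R] [TopologicalSpace R]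
    [SeparatelyContinuousMul R] {ind : semicharSpace S R}
    (hind : (ind : S → R) = Set.indicator {1} 1) (h_joined : Joined 1 ind) :
    PathConnectedSpace (semicharSpace S R) := by
  refine pathConnectedSpace_of_joined_one_of_forall_mul_eq h_joined fun ρ => Subtype.ext ?_
  have ρ_eqOn_one : Set.EqOn (ρ : S → R) 1 {1} := Set.eqOn_singleton.2 ρ.2.1
  rw [Submonoid.coe_mul, hind, mul_indicator_one_of_eqOn_one ρ_eqOn_one]

/-- If the indicator function of `{e}` is a bounded nonnegative semicharacter of a commutative
monoid `S` and there is a continuous path in the semicharacter space `S*_1` (with the topology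
of pointwise convergence) from the constant function `1` to this indicator, then `S*_1` is
path-connected. -/
theorem semicharSpace_pathConnected_of_path
    {S : Type*} [CommMonoid S] [DecidableEq S]
    (ind : S → ℝ) (hind : ind = fun s => if s = 1 then (1 : ℝ) else 0)
    (hmem : ind 1 = 1 ∧ (∀ x y : S, ind (x * y) = ind x * ind y) ∧
      ∀ s : S, ind s ∈ Set.Icc (0 : ℝ) 1)
    (γ : unitInterval →
      {ρ : S → ℝ // ρ 1 = 1 ∧ (∀ x y : S, ρ (x * y) = ρ x * ρ y) ∧
        ∀ s : S, ρ s ∈ Set.Icc (0 : ℝ) 1})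
    (hγ : Continuous γ)
    (hγ0 : (γ 0 : S → ℝ) = fun _ => 1)
    (hγ1 : (γ 1 : S → ℝ) = ind) :
    PathConnectedSpace
      {ρ : S → ℝ // ρ 1 = 1 ∧ (∀ x y : S, ρ (x * y) = ρ x * ρ y) ∧
        ∀ s : S, ρ s ∈ Set.Icc (0 : ℝ) 1} := by
  have hind_indicator : ind = Set.indicator {1} 1 := by ext s; simp [hind, Set.indicator_apply]
  exact semicharSpace_pathConnected_of_path_general (ind := ⟨ind, hmem⟩) hind_indicator
    ⟨⟨⟨γ, hγ⟩, Subtype.ext hγ0, Subtype.ext hγ1⟩⟩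
end

section
/- Let S be a commutative monoid with identity e. If there exists ρ : S → ℝ with ρ(e) = 1, ρ(xy) = ρ(x)ρ(y) for all x, y ∈ S, and 0 < ρ(s) < 1 for all s ∈ S with s ≠ e, then the space S*_1 is path-connected. -/
/-!
The powers `ρ ^ p`, `0 ≤ p`, of a strict semicharacter `ρ` run continuously from the constant `1` to
the indicator of the identity as `p → ∞`. This indicator absorbs every semicharacter under
pointwise multiplication, so multiplying by the path contracts the whole space onto it.
-/

open Filter Set Topology

theorem mul_indicator_singleton_one {α R : Type*} [MulZeroOneClass R] {f : α → R} {a : α}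
    (hf : f a = 1) : f * indicator {a} 1 = indicator {a} 1 := by
  ext x
  rcases eq_or_ne x a with rfl | hx
  · simp [hf]
  · simp [hx]

theorem tendsto_rpow_atTop_indicator {α : Type*} {f : α → ℝ} {A : Set α}
    (hA : ∀ x ∈ A, f x = 1) (hAc : ∀ x ∉ A, |f x| < 1) :
    Tendsto (fun (p : ℝ) x => f x ^ p) atTop (𝓝 (A.indicator 1)) := by
  refine tendsto_pi_nhds.2 fun x => ?_
  by_cases hx : x ∈ A
  · simp [hA x hx, hx]
  · obtain ⟨hlower, hupper⟩ := abs_lt.1 (hAc x hx)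
    simpa [hx] using tendsto_rpow_atTop_of_base_lt_one (f x) hlower hupper

theorem tendsto_div_one_sub_nhdsLT_one :
    Tendsto (fun t : ℝ => t / (1 - t)) (𝓝[<] 1) atTop := by
  have hsub : Tendsto (fun t : ℝ => 1 - t) (𝓝[<] 1) (𝓝[>] 0) := by
    refine tendsto_nhdsWithin_iff.2 ⟨?_, ?_⟩
    · exact (Continuous.tendsto' (by fun_prop) _ _ (sub_self 1)).mono_left nhdsWithin_le_nhds
    · filter_upwards [self_mem_nhdsWithin] with t ht using mem_Ioi.2 (sub_pos.2 ht)
  exact (tendsto_id.mono_left nhdsWithin_le_nhds).pos_mul_atTop one_pos hsub.inv_tendsto_nhdsGT_zero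

theorem joinedIn_of_tendsto_atTop {X : Type*} [TopologicalSpace X] {F : Set X} {γ : ℝ → X} {z : X}
    (hγ : ContinuousOn γ (Ici 0)) (hγF : ∀ p, 0 ≤ p → γ p ∈ F) (hzF : z ∈ F)
    (hz : Tendsto γ atTop (𝓝 z)) : JoinedIn F (γ 0) z := by
  have hnonneg : ∀ t ∈ unitInterval, 0 ≤ t / (1 - t) := fun t ht =>
    div_nonneg ht.1 (sub_nonneg.2 ht.2)
  refine JoinedIn.ofLine (f := Function.update (fun t => γ (t / (1 - t))) 1 z)
    (continuousOn_update_iff.2 ⟨?_, fun _ => ?_⟩) (by simp) (by simp) ?_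
  · refine hγ.comp (continuousOn_id.div (by fun_prop) ?_) fun t ht => hnonneg t ht.1
    exact fun t ht => sub_ne_zero.2 (Ne.symm ht.2)
  · rw [Icc_sdiff_right]
    exact hz.comp (tendsto_div_one_sub_nhdsLT_one.mono_left (nhdsWithin_mono _ fun t ht => ht.2))
  · rintro _ ⟨t, ht, rfl⟩
    rcases eq_or_ne t 1 with rfl | ht_ne
    · simpa using hzF
    · simpa [ht_ne] using hγF _ (hnonneg t ht)

theorem contractibleSpace_of_joined_one {M : Type*} [TopologicalSpace M] [MulOneClass M]
    [ContinuousMul M] {z : M} (hz : ∀ x, x * z = z) (h : Joined 1 z) : ContractibleSpace M := by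
  obtain ⟨γ⟩ := h
  refine contractible_iff_id_nullhomotopic M |>.2 ⟨z, ⟨?_⟩⟩
  exact
    { toFun := fun q => q.2 * γ q.1
      map_zero_left := by simp
      map_one_left := by simp [hz] }

/-- The semicharacter space `S*_1`, as a submonoid of `S → ℝ` under pointwise multiplication; its
subspace topology is that of pointwise convergence. -/
def semicharacters (S : Type*) [MulOneClass S] : Submonoid (S → ℝ) where
  carrier := {ρ | ρ 1 = 1 ∧ (∀ x y, ρ (x * y) = ρ x * ρ y) ∧ ∀ s, ρ s ∈ Icc (0 : ℝ) 1}
  one_mem' := by simp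
  mul_mem' := by
    rintro ρ σ ⟨hρ_one, hρ_mul, hρ⟩ ⟨hσ_one, hσ_mul, hσ⟩
    refine ⟨by simp [hρ_one, hσ_one], fun x y => ?_, fun s => unitInterval.mul_mem (hρ s) (hσ s)⟩
    simp only [Pi.mul_apply, hρ_mul, hσ_mul, mul_mul_mul_comm]

namespace semicharacters

variable {S : Type*} [MulOneClass S]

theorem isClosed : IsClosed (semicharacters S : Set (S → ℝ)) := by
  have h_one : IsClosed {ρ : S → ℝ | ρ 1 = 1} :=
    isClosed_eq (continuous_apply 1) continuous_const
  have h_mul : IsClosed {ρ : S → ℝ | ∀ x y, ρ (x * y) = ρ x * ρ y} := by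
    simp only [ofPred_forall]
    exact isClosed_iInter fun x => isClosed_iInter fun y => isClosed_eq (by fun_prop) (by fun_prop)
  have h_Icc : IsClosed {ρ : S → ℝ | ∀ s, ρ s ∈ Icc (0 : ℝ) 1} := by
    simp only [ofPred_forall]
    exact isClosed_iInter fun s => isClosed_Icc.preimage (continuous_apply s)
  exact h_one.inter (h_mul.inter h_Icc)

theorem rpow_mem {ρ : S → ℝ} (hρ : ρ ∈ semicharacters S) {p : ℝ} (hp : 0 ≤ p) :
    (fun s => ρ s ^ p) ∈ semicharacters S := by
  obtain ⟨hρ_one, hρ_mul, hρ⟩ := hρ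
  refine ⟨by simp [hρ_one], fun x y => ?_, fun s =>
    ⟨Real.rpow_nonneg (hρ s).1 p, Real.rpow_le_one (hρ s).1 (hρ s).2 hp⟩⟩
  simp only [hρ_mul, Real.mul_rpow (hρ x).1 (hρ y).1]

theorem joinedIn_one_of_tendsto_rpow {ρ z : S → ℝ} (hρ : ρ ∈ semicharacters S)
    (hpos : ∀ s, 0 < ρ s) (hz : Tendsto (fun (p : ℝ) s => ρ s ^ p) atTop (𝓝 z)) :
    JoinedIn (semicharacters S : Set (S → ℝ)) 1 z := by
  have hz_mem : z ∈ semicharacters S :=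
    isClosed.mem_of_tendsto hz ((eventually_ge_atTop 0).mono fun p => rpow_mem hρ)
  have hcont : Continuous fun (p : ℝ) s => ρ s ^ p :=
    continuous_pi fun s => Real.continuous_const_rpow (hpos s).ne'
  simpa [← Pi.one_def] using
    joinedIn_of_tendsto_atTop hcont.continuousOn (fun p => rpow_mem hρ) hz_mem hz

end semicharacters

theorem semicharSpace_pathConnected_of_strict_semichar_general {S : Type*} [MulOneClass S]
    (ρ : S →* ℝ) (hρ : ∀ s, s ≠ 1 → 0 < ρ s ∧ ρ s < 1) :
    ContractibleSpace (semicharacters S) := by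
  have hIoc : ∀ s, ρ s ∈ Ioc (0 : ℝ) 1 := fun s => by
    rcases eq_or_ne s 1 with rfl | hs
    · simp
    · exact ⟨(hρ s hs).1, (hρ s hs).2.le⟩
  have hmem : ⇑ρ ∈ semicharacters S :=
    ⟨map_one ρ, map_mul ρ, fun s => Ioc_subset_Icc_self (hIoc s)⟩
  have hlim : Tendsto (fun (p : ℝ) s => ρ s ^ p) atTop (𝓝 (indicator {1} 1)) :=
    tendsto_rpow_atTop_indicator (by simp) fun s hs => by
      simpa [abs_of_pos (hIoc s).1] using (hρ s hs).2
  have hjoined : JoinedIn (semicharacters S : Set (S → ℝ)) 1 (indicator {1} 1) :=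
    semicharacters.joinedIn_one_of_tendsto_rpow hmem (fun s => (hIoc s).1) hlim
  exact contractibleSpace_of_joined_one
    (fun ψ => Subtype.ext (mul_indicator_singleton_one ψ.2.1)) hjoined.joined_subtype

/-- If a commutative monoid `S` admits a semicharacter `ρ` with `ρ e = 1` and `0 < ρ s < 1`
for all `s ≠ e`, then the semicharacter space `S*_1` (with the topology of pointwise
convergence) is path-connected. -/
theorem semicharSpace_pathConnected_of_strict_semichar
    {S : Type*} [CommMonoid S]
    (hρ : ∃ ρ : S → ℝ, ρ 1 = 1 ∧ (∀ x y : S, ρ (x * y) = ρ x * ρ y) ∧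
      ∀ s : S, s ≠ 1 → 0 < ρ s ∧ ρ s < 1) :
    PathConnectedSpace
      {ρ : S → ℝ // ρ 1 = 1 ∧ (∀ x y : S, ρ (x * y) = ρ x * ρ y) ∧
        ∀ s : S, ρ s ∈ Set.Icc (0 : ℝ) 1} := by
  obtain ⟨ρ, hρ_one, hρ_mul, hρ_lt⟩ := hρ
  have := semicharSpace_pathConnected_of_strict_semichar_general ⟨⟨ρ, hρ_one⟩, hρ_mul⟩ hρ_lt
  exact inferInstanceAs (PathConnectedSpace (semicharacters S))
end

section
/- Let A be a commutative unital complex Banach algebra whose character space (with the weak-* topology) is contractible. Then A is a Hermite ring: for all natural numbers k < n, if F is an n×k matrix with entries in A that is left invertible (i.e., there exists a k×n matrix B with entries in A such that B·F is the k×k identity matrix), then there exists an invertible n×n matrix G with entries in A such that G_{ij} = F_{ij} for all 1 ≤ i ≤ n and 1 ≤ j ≤ k (the first k columns of G are the columns of F). -/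
/-!
Gelfand theory turns a left invertible `F` into a left invertible matrix of continuous functions
on the contractible character space; deforming that matrix to a constant one completes it to an
invertible continuous matrix `Φ`. It remains to trade `Φ` for a matrix over `A`, which is the
content of V. Ya. Lin's theorem. Finitely many elements of `A` suffice, so the character space may
be replaced by the polynomial hull `K` of their joint spectrum, and `A` by the uniform closure `𝒜`
of the polynomials on `K`, whose characters are the points of `K`.

Over the cylinder `K × [0, 1]` consider the algebra of continuous functions whose bottom slice
lies in `𝒜`. Multiplying the free columns of `Φ` by the height gives a matrix over this algebra
which is invertible on top, and the task is to make it invertible everywhere without changing its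
top or its prescribed columns; the bottom slice is then the wanted matrix. Cutting `K` along the
level sets of the real parts of generators of `𝒜` reduces this problem to single points, where it
is trivial. Two solutions over adjacent pieces `{|b| ≤ 1}` and `{|b⁻¹| ≤ 1}` are glued by Cartan's
lemma. The additive splitting behind it is free: in the seminorm generated by a monoid `M` of
elements to be bounded by `1`, a sum `∑ mᵢ cᵢ` with `mᵢ ∈ ⟨M, b, b⁻¹⟩` splits term by term, since
each `mᵢ` lies in `⟨M, b⟩` or in `⟨M, b⁻¹⟩`. The path joining the quotient of the two solutions to
`1`, which gluing requires, is a solution of the same problem with one more parameter, so the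
induction on the generators treats all compact parameter spaces at once.
-/

namespace BanachHermite

open Filter Topology
open scoped MatrixGroups

/-! ### Ring seminorms and approximate inverses -/

section RingSeminorm

variable {R : Type*} [Ring R] {q : RingSeminorm R}

lemma map_mul_le_of_le {x y : R} {a b : ℝ} (hx : q x ≤ a) (hy : q y ≤ b) : q (x * y) ≤ a * b :=
  (map_mul_le_mul q x y).trans
    (mul_le_mul hx hy (apply_nonneg q y) ((apply_nonneg q x).trans hx))

lemma map_add_lt_of_lt {x y : R} {a b : ℝ} (hx : q x < a) (hy : q y < b) : q (x + y) < a + b :=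
  (map_add_le_add q x y).trans_lt (add_lt_add hx hy)

lemma map_geom_sum_le (h1 : q 1 ≤ 1) {x : R} (hx : q x < 1) (n : ℕ) :
    q (∑ i ∈ Finset.range n, x ^ i) ≤ (1 - q x)⁻¹ :=
  calc q (∑ i ∈ Finset.range n, x ^ i)
      ≤ ∑ i ∈ Finset.range n, q (x ^ i) :=
        Finset.le_sum_of_subadditive q (map_zero q).le (map_add_le_add q) _ _
    _ ≤ ∑ i ∈ Finset.range n, q x ^ i :=
        Finset.sum_le_sum fun i _ => map_pow_le_pow' h1 x i
    _ ≤ ∑' i : ℕ, q x ^ i :=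
        (summable_geometric_of_lt_one (apply_nonneg q x) hx).sum_le_tsum _
          fun i _ => pow_nonneg (apply_nonneg q x) i
    _ = (1 - q x)⁻¹ := tsum_geometric_of_lt_one (apply_nonneg q x) hx

lemma map_mul_geom_sum_le_one (h1 : q 1 ≤ 1) {m x : R} (hm : q m ≤ 1 / 2) (hx : q x ≤ 1 / 2)
    (n : ℕ) : q (m * ∑ i ∈ Finset.range n, x ^ i) ≤ 1 := by
  have hsum : q (∑ i ∈ Finset.range n, x ^ i) ≤ 2 := (map_geom_sum_le h1 (by linarith) n).trans
    ((inv_le_comm₀ (by linarith) two_pos).2 (by linarith))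
  simpa using map_mul_le_of_le hm hsum

lemma map_mul_pow_le (h1 : q 1 ≤ 1) {m x : R} {b : ℝ} (hm : q m ≤ 1) (hx : q x ≤ b) (n : ℕ) :
    q (m * x ^ n) ≤ b ^ n := by
  simpa using map_mul_le_of_le hm
    ((map_pow_le_pow' h1 x n).trans (pow_le_pow_left₀ (apply_nonneg q x) hx n))

/-- Left invertibility up to a `q`-small error: the image of `h` is left invertible in the
completion of `R` with respect to `q`. -/
def ApproxLeftInvertible (q : RingSeminorm R) (h : R) : Prop := ∃ y, q (y * h - 1) < 1

/-- Two-sided version of `ApproxLeftInvertible`. Requiring the approximate inverse to commute with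
`h` makes it equally good on both sides. -/
def ApproxInvertible (q : RingSeminorm R) (h : R) : Prop := ∃ y, Commute y h ∧ q (y * h - 1) < 1

lemma ApproxInvertible.approxLeftInvertible {h : R} (hh : ApproxInvertible q h) :
    ApproxLeftInvertible q h :=
  let ⟨y, _, hy⟩ := hh
  ⟨y, hy⟩

lemma ApproxLeftInvertible.mono {q' : RingSeminorm R} {h : R} (hqq' : ∀ x, q' x ≤ q x)
    (hh : ApproxLeftInvertible q h) : ApproxLeftInvertible q' h :=
  let ⟨y, hy⟩ := hh
  ⟨y, (hqq' _).trans_lt hy⟩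

lemma ApproxInvertible.mono {q' : RingSeminorm R} {h : R} (hqq' : ∀ x, q' x ≤ q x)
    (hh : ApproxInvertible q h) : ApproxInvertible q' h :=
  let ⟨y, hc, hy⟩ := hh
  ⟨y, hc, (hqq' _).trans_lt hy⟩

lemma ApproxLeftInvertible.of_mul {g h : R} (hgh : ApproxLeftInvertible q (g * h)) :
    ApproxLeftInvertible q h :=
  let ⟨y, hy⟩ := hgh
  ⟨y * g, by rwa [mul_assoc]⟩

-- The partial sums of the Neumann series for `(y * h)⁻¹ * y` stay bounded.
lemma exists_approxInverse_sequence (h1 : q 1 ≤ 1) {h y : R} (hy : q (y * h - 1) < 1) :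
    ∃ C > 0, ∀ η > 0, ∃ y', q y' ≤ C ∧ q (y' * h - 1) < η ∧ (Commute y h → Commute y' h) := by
  set x := 1 - y * h with hx
  have hqx : q x < 1 := by rwa [hx, map_sub_rev]
  have hC : 0 < (1 - q x)⁻¹ * (q y + 1) :=
    mul_pos (inv_pos.2 (by linarith)) (by linarith [apply_nonneg q y])
  refine ⟨(1 - q x)⁻¹ * (q y + 1), hC, fun η hη => ?_⟩
  obtain ⟨J, hJ⟩ := exists_pow_lt_of_lt_one hη hqx
  refine ⟨(∑ i ∈ Finset.range J, x ^ i) * y,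
    map_mul_le_of_le (map_geom_sum_le h1 hqx J) (by linarith), ?_, fun hc => ?_⟩
  · have hgeom : (∑ i ∈ Finset.range J, x ^ i) * (y * h) = 1 - x ^ J := by
      rw [← geom_sum_mul_neg, hx, sub_sub_cancel]
    rw [mul_assoc, hgeom, map_sub_rev, sub_sub_cancel]
    exact (map_pow_le_pow' h1 x J).trans_lt hJ
  · have hcx : Commute x h := (Commute.one_left h).sub_left (hc.mul_left (Commute.refl h))
    exact (Commute.sum_left _ _ _ fun i _ => hcx.pow_left i).mul_left hc

lemma ApproxLeftInvertible.exists_bound (h1 : q 1 ≤ 1) {h : R} (hh : ApproxLeftInvertible q h) :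
    ∃ C > 0, ∀ η > 0, ∃ y, q y ≤ C ∧ q (y * h - 1) < η := by
  obtain ⟨_, hy⟩ := hh
  obtain ⟨C, hC, hCy⟩ := exists_approxInverse_sequence h1 hy
  exact ⟨C, hC, fun η hη => let ⟨y, hyC, hyη, _⟩ := hCy η hη; ⟨y, hyC, hyη⟩⟩

lemma ApproxInvertible.exists_bound (h1 : q 1 ≤ 1) {h : R} (hh : ApproxInvertible q h) :
    ∃ C > 0, ∀ η > 0, ∃ y, q y ≤ C ∧ Commute y h ∧ q (y * h - 1) < η := by
  obtain ⟨_, hc, hy⟩ := hh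
  obtain ⟨C, hC, hCy⟩ := exists_approxInverse_sequence h1 hy
  exact ⟨C, hC, fun η hη => let ⟨y, hyC, hyη, hyc⟩ := hCy η hη; ⟨y, hyC, hyc hc, hyη⟩⟩

lemma ApproxLeftInvertible.mul_unit (h1 : q 1 ≤ 1) {h : R} (hh : ApproxLeftInvertible q h)
    (E : Rˣ) : ApproxLeftInvertible q (h * E) := by
  obtain ⟨C, -, hCy⟩ := hh.exists_bound h1
  obtain ⟨η, hη, hηE⟩ := exists_pos_mul_lt one_pos (q (↑E⁻¹ : R) * q (E : R))
  obtain ⟨y, -, hy⟩ := hCy η hη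
  refine ⟨↑E⁻¹ * y, ?_⟩
  have hconj : (↑E⁻¹ : R) * y * (h * E) - 1 = ↑E⁻¹ * ((y * h - 1) * E) := by
    rw [sub_mul, mul_sub, one_mul, E.inv_mul]; noncomm_ring
  rw [hconj]
  exact (map_mul_le_of_le le_rfl (map_mul_le_of_le hy.le le_rfl)).trans_lt (by linarith)

lemma ApproxLeftInvertible.exists_forall_mul_add (h1 : q 1 ≤ 1) {h : R}
    (hh : ApproxLeftInvertible q h) :
    ∃ t > 0, ∀ u s, q (u - 1) ≤ 1 / 2 → q s < t → ApproxLeftInvertible q (h * u + s) := by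
  obtain ⟨C, _, hCy⟩ := hh.exists_bound h1
  obtain ⟨y, hyC, hy⟩ := hCy (1 / 8) (by norm_num)
  obtain ⟨t, ht, htC⟩ := exists_pos_mul_lt (show (0 : ℝ) < 1 / 8 by norm_num) C
  refine ⟨t, ht, fun u s hu hs => ⟨y, ?_⟩⟩
  have hqu : q u ≤ 1 / 2 + 1 := by
    simpa using (map_add_le_add q (u - 1) 1).trans (add_le_add hu h1)
  have hsplit : y * (h * u + s) - 1 = (y * h - 1) * u + (u - 1) + y * s := by noncomm_ring
  calc q (y * (h * u + s) - 1)
      ≤ q ((y * h - 1) * u) + q (u - 1) + q (y * s) := by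
        rw [hsplit]
        exact (map_add_le_add q _ _).trans (by gcongr; exact map_add_le_add q _ _)
    _ ≤ 1 / 8 * (1 / 2 + 1) + 1 / 2 + C * t := by
        gcongr
        · exact map_mul_le_of_le hy.le hqu
        · exact map_mul_le_of_le hyC hs.le
    _ < 1 := by linarith

lemma ApproxLeftInvertible.exists_forall_of_map_sub_lt (h1 : q 1 ≤ 1) {h : R}
    (hh : ApproxLeftInvertible q h) :
    ∃ t > 0, ∀ g, q (g - h) < t → ApproxLeftInvertible q g := by
  obtain ⟨t, ht, hth⟩ := hh.exists_forall_mul_add h1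
  refine ⟨t, ht, fun g hg => ?_⟩
  simpa using hth 1 (g - h) (by simp) hg

end RingSeminorm

section UnitClosure

variable {R : Type*}

lemma mul_sub_one_mem [Ring R] {N : Ideal R} {x y : R} (hx : x - 1 ∈ N) (hy : y - 1 ∈ N) :
    x * y - 1 ∈ N := by
  have : x * y - 1 = x * (y - 1) + (x - 1) := by noncomm_ring
  rw [this]
  exact N.add_mem (N.mul_mem_left _ hy) hx

/-- The `q`-closure of the group of units congruent to `1` modulo the left ideal `N`. -/
def unitClosure [Ring R] (q : RingSeminorm R) (N : Ideal R) : Set R :=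
  {h | ∀ ε > 0, ∃ E : Rˣ, (E : R) - 1 ∈ N ∧ q (h - E) < ε}

section Ring

variable [Ring R] {q : RingSeminorm R} {N : Ideal R}

lemma one_mem_unitClosure : (1 : R) ∈ unitClosure q N :=
  fun ε hε => ⟨1, by simp, by simpa using hε⟩

lemma mul_mem_unitClosure {x y : R} (hx : x ∈ unitClosure q N) (hy : y ∈ unitClosure q N) :
    x * y ∈ unitClosure q N := by
  intro ε hε
  obtain ⟨δ, hδ, hδx⟩ := exists_pos_mul_lt (half_pos hε) (q x)
  obtain ⟨F, hFN, hF⟩ := hy δ hδ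
  obtain ⟨η, hη, hηF⟩ := exists_pos_mul_lt (half_pos hε) (q (F : R))
  obtain ⟨E, hEN, hE⟩ := hx η hη
  refine ⟨E * F, mul_sub_one_mem hEN hFN, ?_⟩
  have hsplit : x * y - (E * F : Rˣ) = x * (y - F) + (x - E) * F := by
    push_cast; noncomm_ring
  rw [hsplit, ← add_halves ε]
  exact map_add_lt_of_lt ((map_mul_le_of_le le_rfl hF.le).trans_lt hδx)
    ((map_mul_le_of_le hE.le le_rfl).trans_lt (by rwa [mul_comm]))

lemma mem_unitClosure_of_forall_exists {h : R}
    (hh : ∀ ε > 0, ∃ g ∈ unitClosure q N, q (h - g) < ε) : h ∈ unitClosure q N := by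
  intro ε hε
  obtain ⟨g, hg, hgh⟩ := hh (ε / 2) (half_pos hε)
  obtain ⟨E, hEN, hE⟩ := hg (ε / 2) (half_pos hε)
  refine ⟨E, hEN, ?_⟩
  rw [← sub_add_sub_cancel h g E, ← add_halves ε]
  exact map_add_lt_of_lt hgh hE

end Ring

variable [NormedRing R] [NormedAlgebra ℝ R] {q : RingSeminorm R} {N : Ideal R}

lemma map_smul_le_of_le_norm (hone : ‖(1 : R)‖ ≤ 1) (hq : ∀ x, q x ≤ ‖x‖) (c : ℝ) (x : R) :
    q (c • x) ≤ |c| * q x := by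
  have hc : q (c • (1 : R)) ≤ |c| :=
    (hq _).trans ((norm_smul_le c (1 : R)).trans (mul_le_of_le_one_right (abs_nonneg c) hone))
  rw [← smul_one_mul]
  exact map_mul_le_of_le hc le_rfl

variable [CompleteSpace R]

-- One step of the Euler scheme for the differential equation `E' = m * (1 + s • m)⁻¹ * E`, which
-- `s ↦ 1 + s • m` solves; the factor `1 + c • m * p` is norm-close to `1` although `1 + s • m`
-- need not be invertible in `R`.
lemma exists_unit_eulerStep (hone : ‖(1 : R)‖ ≤ 1) (hq : ∀ x, q x ≤ ‖x‖) {m : R} (hm : m ∈ N)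
    (hqm : q m ≤ 1 / 2) (J : ℕ) {s c e : ℝ} (hs : s ∈ Set.Icc (0 : ℝ) 1) (hc : 0 ≤ c)
    (hcm : ‖c • (m * ∑ i ∈ Finset.range J, (-(s • m)) ^ i)‖ < 1) {E : Rˣ} (hEN : (E : R) - 1 ∈ N)
    (hE : q (1 + s • m - E) ≤ e) :
    ∃ E' : Rˣ, (E' : R) - 1 ∈ N ∧
      q (1 + (s + c) • m - E') ≤ (1 + c) * e + c * (1 / 2) ^ J := by
  have h1 : q 1 ≤ 1 := (hq 1).trans hone
  have hsmul := map_smul_le_of_le_norm hone hq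
  set x := -(s • m) with hx
  set p := ∑ i ∈ Finset.range J, x ^ i
  have hqx : q x ≤ 1 / 2 := by
    rw [hx, map_neg_eq_map]
    refine (hsmul s m).trans ?_
    rw [abs_of_nonneg hs.1]
    exact (mul_le_of_le_one_left (apply_nonneg q m) hs.2).trans hqm
  have hqmp : q (m * p) ≤ 1 := map_mul_geom_sum_le_one h1 hqm hqx J
  set U : Rˣ := Units.oneSub (-(c • (m * p))) (by rwa [norm_neg])
  have hU : (U : R) = 1 + c • (m * p) := by simp [U]
  have hUs : (U : R) * (1 + s • m) = 1 + (s + c) • m - c • (m * x ^ J) := by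
    have hgeom : p * (1 + s • m) = 1 - x ^ J := by
      rw [← geom_sum_mul_neg, hx, sub_neg_eq_add]
    rw [hU, add_mul, one_mul, smul_mul_assoc, mul_assoc, hgeom, mul_sub, mul_one, smul_sub,
      add_smul]
    abel
  have hmpN : c • (m * p) ∈ N := by
    have hmp : Commute m p := Commute.sum_right _ _ _ fun i _ =>
      (((Commute.refl m).smul_right s).neg_right).pow_right i
    rw [hmp.eq, ← smul_mul_assoc]
    exact N.mul_mem_left _ hm
  refine ⟨U * E, mul_sub_one_mem (by simpa [hU] using hmpN) hEN, ?_⟩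
  have hsplit : 1 + (s + c) • m - (U * E : Rˣ) = U * (1 + s • m - E) + c • (m * x ^ J) := by
    rw [mul_sub, hUs, Units.val_mul]; abel
  have hcsmul (z : R) : q (c • z) ≤ c * q z := by simpa [abs_of_nonneg hc] using hsmul c z
  have hqU : q (U : R) ≤ 1 + c := by
    rw [hU]
    refine (map_add_le_add q _ _).trans (add_le_add h1 ((hcsmul _).trans ?_))
    exact mul_le_of_le_one_right hc hqmp
  rw [hsplit]
  exact (map_add_le_add q _ _).trans (add_le_add (map_mul_le_of_le hqU hE)
    ((hcsmul _).trans (mul_le_mul_of_nonneg_left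
      (map_mul_pow_le h1 (hqm.trans one_half_lt_one.le) hqx J) hc)))

lemma one_add_inv_pow_le_three {n : ℕ} (hn : n ≠ 0) : (1 + (n : ℝ)⁻¹) ^ n ≤ 3 :=
  calc (1 + (n : ℝ)⁻¹) ^ n
      ≤ Real.exp (n : ℝ)⁻¹ ^ n :=
        pow_le_pow_left₀ (by positivity) (by linarith [Real.add_one_le_exp (n : ℝ)⁻¹]) n
    _ = Real.exp 1 := by rw [← Real.exp_nat_mul, mul_inv_cancel₀ (Nat.cast_ne_zero.2 hn)]
    _ ≤ 3 := by linarith [Real.exp_one_lt_d9]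

lemma one_add_mem_unitClosure (hone : ‖(1 : R)‖ ≤ 1) (hq : ∀ x, q x ≤ ‖x‖) {m : R} (hm : m ∈ N)
    (hqm : q m ≤ 1 / 2) : 1 + m ∈ unitClosure q N := by
  intro ε hε
  obtain ⟨J, hJ⟩ := exists_pow_lt_of_lt_one (half_pos hε) one_half_lt_one
  obtain ⟨C, hC⟩ := (isCompact_Icc (a := (0 : ℝ)) (b := 1)).exists_bound_of_continuousOn
    (f := fun s => m * ∑ i ∈ Finset.range J, (-(s • m)) ^ i) (by fun_prop)
  obtain ⟨n, hn⟩ := exists_nat_gt (max C 0)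
  have hn0 : (0 : ℝ) < n := (le_max_right _ _).trans_lt hn
  have hsteps : ∀ j ≤ n, ∃ E : Rˣ, (E : R) - 1 ∈ N ∧
      q (1 + (j * (n : ℝ)⁻¹) • m - E) ≤ ((1 + (n : ℝ)⁻¹) ^ j - 1) * (1 / 2) ^ J := by
    intro j hj
    induction j with
    | zero => exact ⟨1, by simp, by simp⟩
    | succ j ih =>
      obtain ⟨E, hEN, hE⟩ := ih (by omega)
      have hjI : (j * (n : ℝ)⁻¹) ∈ Set.Icc (0 : ℝ) 1 := by
        refine ⟨by positivity, ?_⟩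
        rw [← div_eq_mul_inv, div_le_one hn0]
        exact_mod_cast (by omega : j ≤ n)
      have hnorm : ‖(n : ℝ)⁻¹ •
          (m * ∑ i ∈ Finset.range J, (-((j * (n : ℝ)⁻¹) • m)) ^ i)‖ < 1 := by
        rw [norm_smul, Real.norm_of_nonneg (by positivity), inv_mul_lt_iff₀ hn0, mul_one]
        exact (hC _ hjI).trans_lt ((le_max_left _ _).trans_lt hn)
      obtain ⟨E', hEN', hE'⟩ :=
        exists_unit_eulerStep hone hq hm hqm J hjI (by positivity) hnorm hEN hE
      refine ⟨E', hEN', ?_⟩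
      rw [Nat.cast_succ, add_one_mul]
      exact hE'.trans_eq (by rw [pow_succ]; ring)
  obtain ⟨E, hEN, hE⟩ := hsteps n le_rfl
  rw [mul_inv_cancel₀ hn0.ne', one_smul] at hE
  refine ⟨E, hEN, hE.trans_lt ?_⟩
  have hpow : (1 + (n : ℝ)⁻¹) ^ n ≤ 3 :=
    one_add_inv_pow_le_three (Nat.cast_ne_zero (R := ℝ).1 hn0.ne')
  nlinarith [pow_pos (one_half_pos (α := ℝ)) J]

-- Near `h` one has `h' ≈ (1 + (h' - h) * h⁻¹) * h`, where `h⁻¹` is approximated by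
-- `1 - y * (h - 1) ∈ 1 + N` for an approximate left inverse `y` of `h`.
lemma exists_forall_mem_unitClosure (hone : ‖(1 : R)‖ ≤ 1) (hq : ∀ x, q x ≤ ‖x‖) {h : R}
    (hN : h - 1 ∈ N) (hinv : ApproxLeftInvertible q h) :
    ∃ δ > 0, ∀ h', h' - 1 ∈ N → q (h' - h) < δ → h ∈ unitClosure q N → h' ∈ unitClosure q N := by
  have h1 : q 1 ≤ 1 := (hq 1).trans hone
  obtain ⟨C, _, hCy⟩ := hinv.exists_bound h1
  obtain ⟨δ, hδ, hδC⟩ := exists_pos_mul_lt one_half_pos (1 + C * q (h - 1))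
  refine ⟨δ, hδ, fun h' hN' hlt hmem => mem_unitClosure_of_forall_exists fun ε hε => ?_⟩
  obtain ⟨η, hη, hηh⟩ := exists_pos_mul_lt hε (δ * q (h - 1))
  obtain ⟨y, hyC, hy⟩ := hCy η hη
  set z := 1 - y * (h - 1) with hz
  have hqz : q z ≤ 1 + C * q (h - 1) :=
    (map_sub_le_add q _ _).trans (add_le_add h1 (map_mul_le_of_le hyC le_rfl))
  have hzN : (h' - h) * z ∈ N := by
    have : (h' - h) * z = (h' - 1) - (h - 1) - ((h' - h) * y) * (h - 1) := by
      rw [hz]; noncomm_ring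
    rw [this]
    exact N.sub_mem (N.sub_mem hN' hN) (N.mul_mem_left _ hN)
  have hqzm : q ((h' - h) * z) ≤ 1 / 2 :=
    (map_mul_le_of_le hlt.le hqz).trans (by linarith)
  refine ⟨_, mul_mem_unitClosure (one_add_mem_unitClosure hone hq hzN hqzm) hmem, ?_⟩
  have herr : h' - (1 + (h' - h) * z) * h = (h' - h) * ((y * h - 1) * (h - 1)) := by
    rw [hz]; noncomm_ring
  rw [herr]
  exact (map_mul_le_of_le hlt.le (map_mul_le_of_le hy.le le_rfl)).trans_lt (by linarith)

lemma path_mem_unitClosure (hone : ‖(1 : R)‖ ≤ 1) (hq : ∀ x, q x ≤ ‖x‖) {Γ : unitInterval → R}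
    (hΓ : Continuous Γ) (hN : ∀ s, Γ s - 1 ∈ N) (hinv : ∀ s, ApproxLeftInvertible q (Γ s))
    (h0 : Γ 0 = 1) (s : unitInterval) : Γ s ∈ unitClosure q N := by
  have hnear (s : unitInterval) {δ : ℝ} (hδ : 0 < δ) : ∀ᶠ s' in 𝓝 s, q (Γ s' - Γ s) < δ := by
    filter_upwards [hΓ.tendsto s (Metric.ball_mem_nhds _ hδ)] with s' hs'
    exact (hq _).trans_lt (mem_ball_iff_norm.1 hs')
  have hclopen : IsClopen {s | Γ s ∈ unitClosure q N} := by
    constructor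
    · refine isClosed_iff_frequently.2 fun s hs => mem_unitClosure_of_forall_exists fun ε hε => ?_
      obtain ⟨s', hs', hlt⟩ := (hs.and_eventually (hnear s hε)).exists
      exact ⟨_, hs', by rwa [map_sub_rev]⟩
    · refine isOpen_iff_mem_nhds.2 fun s hs => ?_
      obtain ⟨δ, hδ, hstep⟩ := exists_forall_mem_unitClosure hone hq (hN s) (hinv s)
      filter_upwards [hnear s hδ] with s' hs'
      exact hstep _ (hN s') hs' hs
  have huniv : {s | Γ s ∈ unitClosure q N} = Set.univ :=
    hclopen.eq_univ ⟨0, by simpa [h0] using one_mem_unitClosure⟩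
  exact Set.eq_univ_iff_forall.1 huniv s

end UnitClosure

/-! ### Cartan gluing -/

section Gluing

variable {R : Type*}

/-- Additive splitting along the left ideal `N`: the seminorm `q₁₂` of an intersection is
controlled by the seminorms `q₁`, `q₂` of the two pieces. -/
def HasSplitting [Ring R] (q₁ q₂ q₁₂ : RingSeminorm R) (N : Ideal R) : Prop :=
  ∀ x ∈ N, ∀ c, q₁₂ x < c → ∃ x₁ ∈ N, ∃ x₂ ∈ N, x₁ + x₂ = x ∧ q₁ x₁ < c ∧ q₂ x₂ < c

section Ring

variable [Ring R] {q₁ q₂ q₁₂ : RingSeminorm R} {N : Ideal R}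

-- Cartan's iteration: each round subtracts the additive splitting of the current error
-- `(1 + m) * u₁ - u₂`, which leaves the error `-(m * s₁)`.
lemma HasSplitting.exists_mul_sub_lt (hsplit : HasSplitting q₁ q₂ q₁₂ N)
    (h₁ : ∀ x, q₁₂ x ≤ q₁ x) {m : R} (hm : m ∈ N) (hqm : q₁₂ m < 1 / 4) {t : ℝ} (ht : 0 < t) :
    ∃ u₁ u₂ : R, u₁ - 1 ∈ N ∧ u₂ - 1 ∈ N ∧ q₁ (u₁ - 1) ≤ 1 / 2 ∧ q₂ (u₂ - 1) ≤ 1 / 2 ∧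
      q₁₂ ((1 + m) * u₁ - u₂) < t := by
  have hiter : ∀ j : ℕ, ∃ u₁ u₂ : R, u₁ - 1 ∈ N ∧ u₂ - 1 ∈ N ∧
      q₁ (u₁ - 1) ≤ 1 / 2 - (1 / 4) ^ j / 2 ∧ q₂ (u₂ - 1) ≤ 1 / 2 - (1 / 4) ^ j / 2 ∧
      q₁₂ ((1 + m) * u₁ - u₂) < (1 / 4) ^ (j + 1) ∧ (1 + m) * u₁ - u₂ ∈ N := by
    intro j
    induction j with
    | zero => exact ⟨1, 1, by simp, by simp, by simp, by simp, by simpa using hqm, by simpa⟩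
    | succ j ih =>
      obtain ⟨u₁, u₂, hu₁, hu₂, hq₁, hq₂, hr, hrN⟩ := ih
      obtain ⟨s₁, hs₁, s₂, hs₂, hsum, hqs₁, hqs₂⟩ := hsplit _ hrN _ hr
      have herr : (1 + m) * (u₁ - s₁) - (u₂ + s₂) = -(m * s₁) := by
        linear_combination (norm := noncomm_ring) -hsum
      have hpos : (0 : ℝ) < (1 / 4) ^ j := by positivity
      rw [pow_succ] at hqs₁ hqs₂
      refine ⟨u₁ - s₁, u₂ + s₂, ?_, ?_, ?_, ?_, ?_, ?_⟩
      · rw [sub_right_comm]; exact N.sub_mem hu₁ hs₁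
      · rw [add_sub_right_comm]; exact N.add_mem hu₂ hs₂
      · rw [sub_right_comm, pow_succ]
        linarith [map_sub_le_add q₁ (u₁ - 1) s₁]
      · rw [add_sub_right_comm, pow_succ]
        linarith [map_add_le_add q₂ (u₂ - 1) s₂]
      · rw [herr, map_neg_eq_map]
        exact (map_mul_le_mul q₁₂ m s₁).trans_lt ((mul_lt_mul'' hqm ((h₁ s₁).trans_lt hqs₁)
          (apply_nonneg _ _) (apply_nonneg _ _)).trans_eq (by ring))
      · rw [herr]; exact N.neg_mem (N.mul_mem_left _ hs₁)
  obtain ⟨j, hj⟩ := exists_pow_lt_of_lt_one ht (show (1 / 4 : ℝ) < 1 by norm_num)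
  obtain ⟨u₁, u₂, hu₁, hu₂, hq₁, hq₂, hr, -⟩ := hiter j
  have hpos : (0 : ℝ) < (1 / 4) ^ j := by positivity
  exact ⟨u₁, u₂, hu₁, hu₂, by linarith, by linarith, by rw [pow_succ] at hr; linarith⟩

-- Cartan's lemma applied to `1 + G₂⁻¹ * (G₁ - G₂)`.
lemma HasSplitting.exists_mul_sub_mul_lt (hsplit : HasSplitting q₁ q₂ q₁₂ N)
    (h₁ : ∀ x, q₁₂ x ≤ q₁ x) (o₁₂ : q₁₂ 1 ≤ 1) {G₂ : R} (hG₂ : ApproxInvertible q₁₂ G₂) :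
    ∃ ε > 0, ∀ G₁, G₁ - G₂ ∈ N → q₁₂ (G₁ - G₂) < ε → ∀ t > 0, ∃ u₁ u₂ : R,
      u₁ - 1 ∈ N ∧ u₂ - 1 ∈ N ∧ q₁ (u₁ - 1) ≤ 1 / 2 ∧ q₂ (u₂ - 1) ≤ 1 / 2 ∧
      q₁₂ (G₁ * u₁ - G₂ * u₂) < t := by
  obtain ⟨C, _, hCy⟩ := hG₂.exists_bound o₁₂
  obtain ⟨ε, hε, hεC⟩ := exists_pos_mul_lt (show (0 : ℝ) < 1 / 4 by norm_num) C
  refine ⟨ε, hε, fun G₁ hdN hd t ht => ?_⟩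
  set d := G₁ - G₂ with hd'
  obtain ⟨η, hη, hηt⟩ := exists_pos_mul_lt (half_pos ht) (ε * (1 / 2 + 1))
  obtain ⟨y, hyC, hyc, hy⟩ := hCy η hη
  obtain ⟨τ, hτ, hτt⟩ := exists_pos_mul_lt (half_pos ht) (q₁₂ G₂)
  obtain ⟨u₁, u₂, hu₁, hu₂, hq₁, hq₂, hr⟩ := hsplit.exists_mul_sub_lt h₁ (N.mul_mem_left y hdN)
    ((map_mul_le_of_le hyC hd.le).trans_lt hεC) hτ
  refine ⟨u₁, u₂, hu₁, hu₂, hq₁, hq₂, ?_⟩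
  have hqu₁ : q₁₂ u₁ ≤ 1 / 2 + 1 := by
    simpa using (map_add_le_add q₁₂ (u₁ - 1) 1).trans (add_le_add ((h₁ _).trans hq₁) o₁₂)
  have hsplit : G₁ * u₁ - G₂ * u₂ =
      G₂ * ((1 + y * d) * u₁ - u₂) + -((y * G₂ - 1) * (d * u₁)) := by
    rw [hyc.eq, hd']; noncomm_ring
  rw [hsplit, ← add_halves t]
  refine map_add_lt_of_lt ((map_mul_le_of_le le_rfl hr.le).trans_lt hτt) ?_
  rw [map_neg_eq_map]
  exact (map_mul_le_of_le hy.le (map_mul_le_of_le hd.le hqu₁)).trans_lt (by linarith)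

lemma HasSplitting.exists_glue_of_close (hsplit : HasSplitting q₁ q₂ q₁₂ N)
    (h₁ : ∀ x, q₁₂ x ≤ q₁ x) (h₂ : ∀ x, q₁₂ x ≤ q₂ x) (o₁ : q₁ 1 ≤ 1) (o₂ : q₂ 1 ≤ 1)
    {G₂ : R} (hG₂ : ApproxInvertible q₂ G₂) :
    ∃ ε > 0, ∀ G₁, G₁ - G₂ ∈ N → q₁₂ (G₁ - G₂) < ε → ApproxLeftInvertible q₁ G₁ →
      ∃ G, G - G₁ ∈ N ∧ ApproxLeftInvertible q₁ G ∧ ApproxLeftInvertible q₂ G := by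
  obtain ⟨ε, hε, hclose⟩ :=
    hsplit.exists_mul_sub_mul_lt h₁ ((h₁ 1).trans o₁) (hG₂.mono h₂)
  refine ⟨ε, hε, fun G₁ hdN hd hG₁ => ?_⟩
  obtain ⟨t₁, ht₁, hpert₁⟩ := hG₁.exists_forall_mul_add o₁
  obtain ⟨t₂, ht₂, hpert₂⟩ := hG₂.approxLeftInvertible.exists_forall_mul_add o₂
  obtain ⟨u₁, u₂, hu₁, hu₂, hq₁, hq₂, hr⟩ := hclose G₁ hdN hd (min t₁ t₂) (lt_min ht₁ ht₂)
  have hrN : G₁ * u₁ - G₂ * u₂ ∈ N := by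
    have : G₁ * u₁ - G₂ * u₂ = G₁ * (u₁ - 1) - G₂ * (u₂ - 1) + (G₁ - G₂) := by noncomm_ring
    rw [this]
    exact N.add_mem (N.sub_mem (N.mul_mem_left _ hu₁) (N.mul_mem_left _ hu₂)) hdN
  obtain ⟨s₁, hs₁, s₂, -, hsum, hqs₁, hqs₂⟩ := hsplit _ hrN _ hr
  have hG : G₁ * u₁ + -s₁ = G₂ * u₂ + s₂ := by
    linear_combination (norm := noncomm_ring) -hsum
  refine ⟨G₁ * u₁ + -s₁, ?_, hpert₁ u₁ (-s₁) hq₁ ?_, ?_⟩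
  · have : G₁ * u₁ + -s₁ - G₁ = G₁ * (u₁ - 1) - s₁ := by noncomm_ring
    rw [this]
    exact N.sub_mem (N.mul_mem_left _ hu₁) hs₁
  · rw [map_neg_eq_map]; exact hqs₁.trans_le (min_le_left _ _)
  · rw [hG]; exact hpert₂ u₂ s₂ hq₂ (hqs₂.trans_le (min_le_right _ _))

lemma ApproxInvertible.exists_mul_sub_lt {q : RingSeminorm R} (h1 : q 1 ≤ 1) {G₁ G₂ : R}
    (hG₁ : ApproxInvertible q G₁) (hN : G₂ - G₁ ∈ N) {ε : ℝ} (hε : 0 < ε) :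
    ∃ h, h - 1 ∈ N ∧ q (G₁ * h - G₂) < ε := by
  obtain ⟨C, -, hCy⟩ := hG₁.exists_bound h1
  obtain ⟨η, hη, hηε⟩ := exists_pos_mul_lt hε (q (G₂ - G₁))
  obtain ⟨y, -, hyc, hy⟩ := hCy η hη
  refine ⟨1 + y * (G₂ - G₁), by simpa using N.mul_mem_left y hN, ?_⟩
  have herr : G₁ * (1 + y * (G₂ - G₁)) - G₂ = (y * G₁ - 1) * (G₂ - G₁) := by
    rw [hyc.eq]; noncomm_ring
  rw [herr]
  exact (map_mul_le_of_le hy.le le_rfl).trans_lt (by rwa [mul_comm])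

end Ring

/-- Path-connectedness to `1` of the approximately left invertible elements congruent to `1`
modulo `N`. -/
def IsPathConnectedToOne [Ring R] [TopologicalSpace R] (q : RingSeminorm R) (N : Ideal R) : Prop :=
  ∀ h, h - 1 ∈ N → ApproxLeftInvertible q h → ∃ Γ : unitInterval → R, Continuous Γ ∧
    (∀ s, Γ s - 1 ∈ N) ∧ (∀ s, ApproxLeftInvertible q (Γ s)) ∧ Γ 0 = 1 ∧ Γ 1 = h

variable [NormedRing R] [NormedAlgebra ℝ R] [CompleteSpace R] {q₁ q₂ q₁₂ : RingSeminorm R}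
  {N : Ideal R}

-- The transition element `G₁⁻¹ * G₂` is approximated by a unit of `R` with the help of the path.
lemma IsPathConnectedToOne.exists_unit_mul_sub_lt {q : RingSeminorm R}
    (hpath : IsPathConnectedToOne q N) (hone : ‖(1 : R)‖ ≤ 1) (hq : ∀ x, q x ≤ ‖x‖) {G₁ G₂ : R}
    (hN : G₂ - G₁ ∈ N) (hG₁ : ApproxInvertible q G₁) (hG₂ : ApproxLeftInvertible q G₂)
    {ε : ℝ} (hε : 0 < ε) : ∃ E : Rˣ, (E : R) - 1 ∈ N ∧ q (G₁ * E - G₂) < ε := by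
  have h1 : q 1 ≤ 1 := (hq 1).trans hone
  obtain ⟨t, ht, hG₂t⟩ := hG₂.exists_forall_of_map_sub_lt h1
  obtain ⟨h, hhN, hh⟩ := hG₁.exists_mul_sub_lt h1 hN (lt_min ht (half_pos hε))
  have hinv : ApproxLeftInvertible q h := (hG₂t _ (hh.trans_le (min_le_left _ _))).of_mul
  obtain ⟨Γ, hΓ, hΓN, hΓinv, hΓ0, hΓ1⟩ := hpath h hhN hinv
  have hmem : h ∈ unitClosure q N := hΓ1 ▸ path_mem_unitClosure hone hq hΓ hΓN hΓinv hΓ0 1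
  obtain ⟨δ, hδ, hδG⟩ := exists_pos_mul_lt (half_pos hε) (q G₁)
  obtain ⟨E, hEN, hE⟩ := hmem δ hδ
  refine ⟨E, hEN, ?_⟩
  have hsplit : G₁ * E - G₂ = (G₁ * h - G₂) + -(G₁ * (h - E)) := by noncomm_ring
  rw [hsplit, ← add_halves ε]
  refine map_add_lt_of_lt (hh.trans_le (min_le_right _ _)) ?_
  rw [map_neg_eq_map]
  exact (map_mul_le_of_le le_rfl hE.le).trans_lt hδG

theorem HasSplitting.exists_glue (hsplit : HasSplitting q₁ q₂ q₁₂ N)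
    (hpath : IsPathConnectedToOne q₁₂ N) (hone : ‖(1 : R)‖ ≤ 1) (hq₁ : ∀ x, q₁ x ≤ ‖x‖)
    (hq₂ : ∀ x, q₂ x ≤ ‖x‖) (h₁ : ∀ x, q₁₂ x ≤ q₁ x) (h₂ : ∀ x, q₁₂ x ≤ q₂ x) {G₁ G₂ : R}
    (hN : G₂ - G₁ ∈ N) (hG₁ : ApproxInvertible q₁ G₁) (hG₂ : ApproxInvertible q₂ G₂) :
    ∃ G, G - G₁ ∈ N ∧ ApproxLeftInvertible q₁ G ∧ ApproxLeftInvertible q₂ G := by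
  have o₁ : q₁ 1 ≤ 1 := (hq₁ 1).trans hone
  have o₂ : q₂ 1 ≤ 1 := (hq₂ 1).trans hone
  obtain ⟨ε, hε, hglue⟩ := hsplit.exists_glue_of_close h₁ h₂ o₁ o₂ hG₂
  obtain ⟨E, hEN, hE⟩ := hpath.exists_unit_mul_sub_lt hone (fun x => (h₁ x).trans (hq₁ x)) hN
    (hG₁.mono h₁) (hG₂.mono h₂).approxLeftInvertible hε
  have hEG₁ : G₁ * E - G₁ ∈ N := by
    simpa [mul_sub] using N.mul_mem_left G₁ hEN
  have hEG₂ : G₁ * E - G₂ ∈ N := by simpa using N.sub_mem hEG₁ hN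
  obtain ⟨G, hGN, hG⟩ := hglue _ hEG₂ hE (hG₁.approxLeftInvertible.mul_unit o₁ E)
  exact ⟨G, by simpa using N.add_mem hGN hEG₁, hG⟩

end Gluing

/-! ### Seminorms generated by a monoid -/

section MonoidSeminorm

variable {S R : Type*} [CommRing S] [NormedRing R] [Algebra S R]

/-- `IsMonoidSum M x r` says that `x` is a finite sum `∑ mᵢ • cᵢ` with `mᵢ ∈ M` and
`∑ ‖cᵢ‖ ≤ r`. -/
inductive IsMonoidSum (M : Submonoid S) : R → ℝ → Prop
  | zero (r : ℝ) : 0 ≤ r → IsMonoidSum M 0 r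
  | smul_add (m : S) (c x : R) (r r' : ℝ) :
      m ∈ M → ‖c‖ + r ≤ r' → IsMonoidSum M x r → IsMonoidSum M (m • c + x) r'

namespace IsMonoidSum

variable {M M' : Submonoid S} {x y : R} {r s : ℝ}

lemma nonneg (h : IsMonoidSum M x r) : 0 ≤ r := by
  induction h with
  | zero _ h => exact h
  | smul_add _ c _ _ _ _ _ _ ih => linarith [norm_nonneg c]

lemma smul {m : S} (hm : m ∈ M) (c : R) : IsMonoidSum M (m • c) ‖c‖ := by
  simpa using smul_add (M := M) m c 0 0 ‖c‖ hm (by simp) (zero 0 le_rfl)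

lemma self (c : R) : IsMonoidSum M c ‖c‖ := by
  simpa using smul M.one_mem c

lemma mono_right (h : IsMonoidSum M x r) (hrs : r ≤ s) : IsMonoidSum M x s := by
  cases h with
  | zero _ h => exact zero _ (h.trans hrs)
  | smul_add _ c _ r _ hm hr h => exact smul_add _ c _ r s hm (hr.trans hrs) h

lemma mono_left (hM : M ≤ M') (h : IsMonoidSum M x r) : IsMonoidSum M' x r := by
  induction h with
  | zero r h => exact zero _ h
  | smul_add m c x r r' hm hr _ ih => exact smul_add m c x r r' (hM hm) hr ih

lemma add (h : IsMonoidSum M x r) (h' : IsMonoidSum M y s) : IsMonoidSum M (x + y) (r + s) := by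
  induction h with
  | zero r h => rw [zero_add]; exact h'.mono_right (by linarith)
  | smul_add m c x r r' hm hr _ ih =>
    rw [add_assoc]; exact smul_add m c _ _ _ hm (by linarith) ih

lemma map {R' : Type*} [NormedRing R'] [Algebra S R'] (L : R →+ R') {k : ℝ} (hk : 0 ≤ k)
    (hL : ∀ (m : S) c, L (m • c) = m • L c) (hn : ∀ c, ‖L c‖ ≤ k * ‖c‖)
    (h : IsMonoidSum M x r) : IsMonoidSum M (L x) (k * r) := by
  induction h with
  | zero r h => rw [map_zero]; exact zero _ (mul_nonneg hk h)
  | smul_add m c x r r' hm hr _ ih =>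
    rw [map_add, hL]
    refine smul_add m _ _ _ _ hm ?_ ih
    nlinarith [hn c]

lemma smul_mul {m : S} (hm : m ∈ M) (c : R) (h : IsMonoidSum M y s) :
    IsMonoidSum M (m • c * y) (‖c‖ * s) := by
  induction h with
  | zero s hs => rw [mul_zero]; exact zero _ (mul_nonneg (norm_nonneg c) hs)
  | smul_add m₂ c₂ y s s' hm₂ hs _ ih =>
    rw [mul_add, smul_mul_smul_comm]
    refine smul_add _ _ _ _ _ (M.mul_mem hm hm₂) ?_ ih
    nlinarith [norm_mul_le c c₂, norm_nonneg c]

lemma mul (h : IsMonoidSum M x r) (h' : IsMonoidSum M y s) : IsMonoidSum M (x * y) (r * s) := by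
  induction h with
  | zero r h => rw [zero_mul]; exact zero _ (mul_nonneg h h'.nonneg)
  | smul_add m c x r r' hm hr _ ih =>
    rw [add_mul]
    exact ((smul_mul hm c h').add ih).mono_right (by nlinarith [h'.nonneg])

lemma neg (h : IsMonoidSum M x r) : IsMonoidSum M (-x) r := by
  simpa using h.map (-AddMonoidHom.id R) zero_le_one (by simp) (by simp)

lemma sInf_le (h : IsMonoidSum M x r) : sInf {r | IsMonoidSum M x r} ≤ r :=
  csInf_le ⟨0, fun _ h => nonneg h⟩ h

lemma sInf_nonneg : 0 ≤ sInf {r | IsMonoidSum M x r} :=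
  le_csInf ⟨_, self x⟩ fun _ h => nonneg h

lemma of_sInf_lt (h : sInf {r | IsMonoidSum M x r} < s) : IsMonoidSum M x s := by
  obtain ⟨r, hr, hrs⟩ := exists_lt_of_csInf_lt ⟨_, self x⟩ h
  exact mono_right hr hrs.le

lemma exists_add {M₁ M₂ M₁₂ : Submonoid S} (hM : ∀ m ∈ M₁₂, m ∈ M₁ ∨ m ∈ M₂)
    (h : IsMonoidSum M₁₂ x r) :
    ∃ x₁ x₂, x₁ + x₂ = x ∧ IsMonoidSum M₁ x₁ r ∧ IsMonoidSum M₂ x₂ r := by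
  induction h with
  | zero r h => exact ⟨0, 0, add_zero 0, .zero r h, .zero r h⟩
  | smul_add m c x r r' hm hr h ih =>
    obtain ⟨x₁, x₂, rfl, h₁, h₂⟩ := ih
    have hc := norm_nonneg c
    rcases hM m hm with hm | hm
    · exact ⟨_, x₂, add_assoc _ _ _, .smul_add m c x₁ r r' hm hr h₁, h₂.mono_right (by linarith)⟩
    · exact ⟨x₁, _, add_left_comm _ _ _, h₁.mono_right (by linarith),
        .smul_add m c x₂ r r' hm hr h₂⟩

end IsMonoidSum

variable {M M' : Submonoid S}

variable (R) in
/-- The largest seminorm on `R` that is dominated by the norm and for which multiplication by the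
elements of `M` is a contraction. -/
noncomputable def monoidSeminorm (M : Submonoid S) : RingSeminorm R where
  toFun x := sInf {r | IsMonoidSum M x r}
  map_zero' := (IsMonoidSum.zero 0 le_rfl).sInf_le.antisymm IsMonoidSum.sInf_nonneg
  add_le' x y := le_add_of_forall_lt fun r hr s hs =>
    ((IsMonoidSum.of_sInf_lt hr).add (IsMonoidSum.of_sInf_lt hs)).sInf_le
  neg' x := congrArg sInf <| Set.ext fun r =>
    ⟨fun h => by simpa using IsMonoidSum.neg h, IsMonoidSum.neg⟩
  mul_le' x y := le_mul_of_forall_lt₀ fun r hr s hs =>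
    ((IsMonoidSum.of_sInf_lt hr).mul (IsMonoidSum.of_sInf_lt hs)).sInf_le

lemma IsMonoidSum.monoidSeminorm_le {x : R} {r : ℝ} (h : IsMonoidSum M x r) :
    monoidSeminorm R M x ≤ r :=
  h.sInf_le

lemma isMonoidSum_of_monoidSeminorm_lt {x : R} {r : ℝ} (h : monoidSeminorm R M x < r) :
    IsMonoidSum M x r :=
  IsMonoidSum.of_sInf_lt h

lemma monoidSeminorm_le_norm (x : R) : monoidSeminorm R M x ≤ ‖x‖ :=
  (IsMonoidSum.self x).monoidSeminorm_le

lemma monoidSeminorm_anti (hM : M ≤ M') (x : R) : monoidSeminorm R M' x ≤ monoidSeminorm R M x :=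
  le_of_forall_gt_imp_ge_of_dense fun _ hr =>
    ((isMonoidSum_of_monoidSeminorm_lt hr).mono_left hM).monoidSeminorm_le

lemma monoidSeminorm_map_le {R' : Type*} [NormedRing R'] [Algebra S R'] (L : R →+ R') {k : ℝ}
    (hk : 0 ≤ k) (hL : ∀ (m : S) c, L (m • c) = m • L c) (hn : ∀ c, ‖L c‖ ≤ k * ‖c‖) (x : R) :
    monoidSeminorm R' M (L x) ≤ k * monoidSeminorm R M x :=
  le_mul_of_forall_lt₀ fun _ hk' _ hr =>
    let h := isMonoidSum_of_monoidSeminorm_lt hr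
    ((h.map L hk hL hn).mono_right
      (mul_le_mul_of_nonneg_right hk'.le h.nonneg)).monoidSeminorm_le

lemma monoidSeminorm_smul_le {k : Type*} [NormedField k] [NormedSpace k R] [SMulCommClass k S R]
    (c : k) (x : R) : monoidSeminorm R M (c • x) ≤ ‖c‖ * monoidSeminorm R M x :=
  monoidSeminorm_map_le (DistribSMul.toAddMonoidHom R c) (norm_nonneg c)
    (fun m x => smul_comm c m x) (fun x => (norm_smul c x).le) x

lemma IsMonoidSum.norm_map_le {R' : Type*} [NormedRing R'] [NormedSpace ℂ R'] (f : R →+ R')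
    {φ : S → ℂ} (hφ : ∀ m ∈ M, ‖φ m‖ ≤ 1) (hf : ∀ m c, f (m • c) = φ m • f c)
    (hn : ∀ c, ‖f c‖ ≤ ‖c‖) {x : R} {r : ℝ} (h : IsMonoidSum M x r) : ‖f x‖ ≤ r := by
  induction h with
  | zero r h => simpa using h
  | smul_add m c x r r' hm hr _ ih =>
    calc ‖f (m • c + x)‖ ≤ ‖φ m‖ * ‖f c‖ + ‖f x‖ := by
          rw [map_add, hf, ← norm_smul]
          exact norm_add_le _ _
      _ ≤ 1 * ‖c‖ + r := by
          gcongr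
          exacts [hφ m hm, hn c]
      _ ≤ r' := by rwa [one_mul]

lemma norm_map_le_monoidSeminorm {R' : Type*} [NormedRing R'] [NormedSpace ℂ R'] (f : R →+ R')
    {φ : S → ℂ} (hφ : ∀ m ∈ M, ‖φ m‖ ≤ 1) (hf : ∀ m c, f (m • c) = φ m • f c)
    (hn : ∀ c, ‖f c‖ ≤ ‖c‖) (x : R) : ‖f x‖ ≤ monoidSeminorm R M x :=
  le_of_forall_gt_imp_ge_of_dense fun _ hr =>
    (isMonoidSum_of_monoidSeminorm_lt hr).norm_map_le f hφ hf hn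

end MonoidSeminorm

lemma exists_norm_mul_sub_one_lt {S : Type*} [SeminormedCommRing S] [NormedAlgebra ℂ S]
    (hone : ‖(1 : S)‖ ≤ 1) {d : S}
    (hd : ∀ χ : S →ₐ[ℂ] ℂ, (∀ x, ‖χ x‖ ≤ ‖x‖) → χ d ≠ 0) : ∃ e, ‖d * e - 1‖ < 1 := by
  let ι : S →ₐ[ℂ] UniformSpace.Completion S :=
    { UniformSpace.Completion.coeRingHom (α := S) with commutes' := fun _ => rfl }
  have hι (x : S) : ‖ι x‖ = ‖x‖ := UniformSpace.Completion.norm_coe x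
  have hunit : IsUnit (ι d) := by
    by_contra hd'
    obtain ⟨f, hf⟩ := WeakDual.CharacterSpace.exists_apply_eq_zero hd'
    let F := WeakDual.CharacterSpace.toAlgHom f
    refine hd (F.comp ι) (fun x => ?_) hf
    have hone' : ‖(1 : UniformSpace.Completion S)‖ ≤ 1 := by
      rwa [← map_one ι, hι]
    exact (AlgHom.norm_apply_le_self_mul_norm_one F (ι x)).trans
      ((mul_le_of_le_one_right (norm_nonneg _) hone').trans_eq (hι x))
  obtain ⟨e', he'⟩ := hunit.exists_right_inv
  have hopen : IsOpen {x : UniformSpace.Completion S | ‖ι d * x - 1‖ < 1} :=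
    isOpen_lt (by fun_prop) continuous_const
  obtain ⟨e, he⟩ := UniformSpace.Completion.denseRange_coe.exists_mem_open hopen
    ⟨e', by simp [he']⟩
  refine ⟨e, ?_⟩
  rw [← hι, map_sub, map_mul, map_one]
  exact he

-- Gelfand theory of the completion of `S` with respect to `q`.
lemma exists_map_mul_sub_one_lt {S : Type*} [CommRing S] [Algebra ℂ S] {q : RingSeminorm S}
    (h1 : q 1 ≤ 1) (hsmul : ∀ (c : ℂ) x, q (c • x) ≤ ‖c‖ * q x) {d : S}
    (hd : ∀ χ : S →ₐ[ℂ] ℂ, (∀ x, ‖χ x‖ ≤ q x) → χ d ≠ 0) : ∃ e, q (d * e - 1) < 1 :=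
  letI : SeminormedCommRing S :=
    { RingSeminorm.toSeminormedRing q with mul_comm := mul_comm }
  letI : NormedAlgebra ℂ S := { norm_smul_le := hsmul }
  exists_norm_mul_sub_one_lt h1 hd

section OperatorNorm

open scoped Matrix.Norms.Operator

section MatrixInvertibility

variable {S : Type*} [NormedCommRing S] {M : Submonoid S} {ι : Type*} [Fintype ι] [DecidableEq ι]

lemma norm_matrix_one_le (hone : ‖(1 : S)‖ ≤ 1) :
    ‖(1 : Matrix ι ι S)‖ ≤ 1 := by
  rw [← Matrix.diagonal_one, Matrix.linfty_opNorm_diagonal]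
  exact (pi_norm_le_iff_of_nonneg zero_le_one).2 fun _ => hone

lemma norm_apply_le_of_norm_le_monoidSeminorm (hone : ‖(1 : S)‖ ≤ 1) {χ : S → ℂ}
    (hχ : ∀ x, ‖χ x‖ ≤ monoidSeminorm S M x) {m : S} (hm : m ∈ M) : ‖χ m‖ ≤ 1 := by
  have := (IsMonoidSum.smul hm (1 : S)).monoidSeminorm_le
  rw [smul_eq_mul, mul_one] at this
  exact (hχ m).trans (this.trans hone)

variable [NormedAlgebra ℂ S]

lemma approxInvertible_of_det_ne_zero (hone : ‖(1 : S)‖ ≤ 1) {G : Matrix ι ι S}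
    (hG : ∀ χ : S →ₐ[ℂ] ℂ, (∀ m ∈ M, ‖χ m‖ ≤ 1) → (χ.mapMatrix G).det ≠ 0) :
    ApproxInvertible (monoidSeminorm (Matrix ι ι S) M) G := by
  obtain ⟨e, he⟩ := exists_map_mul_sub_one_lt (q := monoidSeminorm S M) (d := G.det)
    ((monoidSeminorm_le_norm 1).trans hone) monoidSeminorm_smul_le fun χ hχ => by
      rw [AlgHom.map_det]
      exact hG χ fun m => norm_apply_le_of_norm_le_monoidSeminorm hone hχ
  refine ⟨e • G.adjugate, ?_, ?_⟩
  · rw [Commute, SemiconjBy, Matrix.smul_mul, Matrix.mul_smul, Matrix.adjugate_mul,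
      Matrix.mul_adjugate]
  · have hscalar : e • G.adjugate * G - 1 = Matrix.scalar ι (G.det * e - 1) := by
      rw [Matrix.smul_mul, Matrix.adjugate_mul, map_sub, map_one, smul_smul, mul_comm,
        Matrix.scalar_apply, Matrix.smul_one_eq_diagonal]
    have hle := monoidSeminorm_map_le (M := M) (Matrix.scalar ι).toAddMonoidHom zero_le_one
      (fun m c => by ext i j; simp [Matrix.diagonal_apply])
      (fun c : S => by
        change ‖Matrix.diagonal fun _ : ι => c‖ ≤ _
        rw [Matrix.linfty_opNorm_diagonal, one_mul]
        exact (pi_norm_le_iff_of_nonneg (norm_nonneg _)).2 fun _ => le_rfl) (G.det * e - 1)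
    rw [hscalar]
    exact hle.trans_lt (by rwa [one_mul])

lemma ApproxLeftInvertible.det_ne_zero {G : Matrix ι ι S}
    (hG : ApproxLeftInvertible (monoidSeminorm (Matrix ι ι S) M) G) {χ : S →ₐ[ℂ] ℂ}
    (hχ : ∀ x, ‖χ x‖ ≤ ‖x‖) (hM : ∀ m ∈ M, ‖χ m‖ ≤ 1) : (χ.mapMatrix G).det ≠ 0 := by
  obtain ⟨y, hy⟩ := hG
  have hnorm (c : Matrix ι ι S) : ‖χ.mapMatrix c‖ ≤ ‖c‖ := by
    rw [← coe_nnnorm, ← coe_nnnorm, NNReal.coe_le_coe, Matrix.linfty_opNNNorm_def,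
      Matrix.linfty_opNNNorm_def]
    exact Finset.sup_mono_fun fun i _ => Finset.sum_le_sum fun j _ => hχ (c i j)
  have hlt : ‖1 - χ.mapMatrix (y * G)‖ < 1 := by
    rw [norm_sub_rev, ← map_one χ.mapMatrix, ← map_sub]
    exact (norm_map_le_monoidSeminorm (χ.mapMatrix (m := ι)).toRingHom.toAddMonoidHom hM
      (fun m c => by ext i j; simp) hnorm _).trans_lt hy
  have hunit : IsUnit (χ.mapMatrix y * χ.mapMatrix G) := by
    simpa using isUnit_one_sub_of_norm_lt_one hlt
  exact ((Matrix.isUnit_iff_isUnit_det _).1 (isUnit_of_mul_isUnit_right hunit)).ne_zero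

end MatrixInvertibility

/-! ### Natural algebras and their slice algebras -/

section EvalChar

variable {X : Type*} [TopologicalSpace X]

/-- Evaluation at a point, as a character of an algebra of continuous functions. -/
noncomputable def evalChar (𝒜 : Subalgebra ℂ C(X, ℂ)) (p : X) : 𝒜 →ₐ[ℂ] ℂ :=
  (ContinuousMap.evalAlgHom ℂ ℂ p).comp 𝒜.val

@[simp]
lemma evalChar_apply {𝒜 : Subalgebra ℂ C(X, ℂ)} (p : X) (f : 𝒜) :
    evalChar 𝒜 p f = (f : C(X, ℂ)) p := rfl

lemma norm_one_subalgebra_le [CompactSpace X] (𝒜 : Subalgebra ℂ C(X, ℂ)) : ‖(1 : 𝒜)‖ ≤ 1 :=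
  (ContinuousMap.norm_le _ zero_le_one).2 fun p => by simp

lemma norm_evalChar_apply_le [CompactSpace X] {𝒜 : Subalgebra ℂ C(X, ℂ)} (p : X) (f : 𝒜) :
    ‖evalChar 𝒜 p f‖ ≤ ‖f‖ :=
  ContinuousMap.norm_coe_le_norm (f : C(X, ℂ)) p

end EvalChar

section NaturalAlgebra

variable {K : Type*} [TopologicalSpace K] [CompactSpace K]

/-- A uniformly closed algebra of continuous functions all of whose characters are evaluations at
points of `K`. Separation of points is not required. -/
structure IsNatural (𝒜 : Subalgebra ℂ C(K, ℂ)) : Prop where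
  isClosed : IsClosed (𝒜 : Set C(K, ℂ))
  exists_eval : ∀ χ : 𝒜 →ₐ[ℂ] ℂ, ∃ z, ∀ f : 𝒜, χ f = (f : C(K, ℂ)) z

lemma exists_eval_of_algHom [T2Space K] (χ : C(K, ℂ) →ₐ[ℂ] ℂ) : ∃ z, ∀ f, χ f = f z := by
  obtain ⟨z, hz⟩ := (WeakDual.CharacterSpace.continuousMapEval_bijective (X := K) (𝕜 := ℂ)).2
    (WeakDual.CharacterSpace.equivAlgHom.symm χ)
  exact ⟨z, fun f => by simpa using (DFunLike.congr_fun hz f).symm⟩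

end NaturalAlgebra

lemma exists_comp_eq_of_surjective {R A B C : Type*} [CommRing R] [Ring A] [Ring B] [Ring C]
    [Algebra R A] [Algebra R B] [Algebra R C] {r : A →ₐ[R] B} (hr : Function.Surjective r)
    {χ : A →ₐ[R] C} (hχ : ∀ a, r a = 0 → χ a = 0) : ∃ ψ : B →ₐ[R] C, ψ.comp r = χ := by
  refine ⟨(Ideal.Quotient.liftₐ (RingHom.ker r) χ hχ).comp
    (Ideal.quotientKerAlgEquivOfSurjective hr).symm.toAlgHom, AlgHom.ext fun a => ?_⟩
  have : (Ideal.quotientKerAlgEquivOfSurjective hr).symm (r a) = Ideal.Quotient.mk _ a := by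
    rw [AlgEquiv.symm_apply_eq]; rfl
  rw [AlgHom.comp_apply, AlgHom.comp_apply]
  exact (congrArg _ this).trans (Ideal.Quotient.liftₐ_apply _ _ _ _)

section SliceAlgebra

variable {T K : Type*} [TopologicalSpace T] [TopologicalSpace K]

/-- The inclusion of the slice of `T × K` over `s`. -/
def sliceMap (K : Type*) [TopologicalSpace K] (s : T) : C(K, T × K) :=
  ⟨fun z => (s, z), by fun_prop⟩

/-- The algebra of continuous functions on `T × K` whose slices over the points of `T₀` belong to
`𝒜`. -/
def sliceAlgebra (𝒜 : Subalgebra ℂ C(K, ℂ)) (T₀ : Set T) : Subalgebra ℂ C(T × K, ℂ) where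
  carrier := {f | ∀ s ∈ T₀, f.comp (sliceMap K s) ∈ 𝒜}
  mul_mem' hf hg s hs := 𝒜.mul_mem (hf s hs) (hg s hs)
  add_mem' hf hg s hs := 𝒜.add_mem (hf s hs) (hg s hs)
  algebraMap_mem' c _ _ := 𝒜.algebraMap_mem c

variable {𝒜 : Subalgebra ℂ C(K, ℂ)} {T₀ : Set T}

lemma mem_sliceAlgebra {f : C(T × K, ℂ)} :
    f ∈ sliceAlgebra 𝒜 T₀ ↔ ∀ s ∈ T₀, f.comp (sliceMap K s) ∈ 𝒜 := Iff.rfl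

lemma isClosed_sliceAlgebra [CompactSpace K] [CompactSpace T]
    (h𝒜 : IsClosed (𝒜 : Set C(K, ℂ))) :
    IsClosed (sliceAlgebra 𝒜 T₀ : Set C(T × K, ℂ)) := by
  have : (sliceAlgebra 𝒜 T₀ : Set C(T × K, ℂ)) =
      ⋂ s ∈ T₀, (fun f : C(T × K, ℂ) => f.comp (sliceMap K s)) ⁻¹' (𝒜 : Set C(K, ℂ)) := by
    ext f
    simp [mem_sliceAlgebra]
  rw [this]
  exact isClosed_biInter fun s _ => h𝒜.preimage (ContinuousMap.continuous_precomp _)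

variable (𝒜 T₀) in
/-- Functions of the first coordinate, as elements of the slice algebra. -/
noncomputable def ofBase : C(T, ℂ) →ₐ[ℂ] sliceAlgebra 𝒜 T₀ :=
  (ContinuousMap.compRightAlgHom ℂ ℂ (ContinuousMap.fst : C(T × K, T))).codRestrict _
    fun f s _ => 𝒜.algebraMap_mem (f s)

@[simp]
lemma coe_ofBase_apply (f : C(T, ℂ)) (p : T × K) : (ofBase 𝒜 T₀ f : C(T × K, ℂ)) p = f p.1 := rfl

variable (𝒜 T₀) in
/-- Functions of the second coordinate that belong to `𝒜`, as elements of the slice algebra. -/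
noncomputable def ofFiber : 𝒜 →ₐ[ℂ] sliceAlgebra 𝒜 T₀ :=
  ((ContinuousMap.compRightAlgHom ℂ ℂ (ContinuousMap.snd : C(T × K, K))).comp
    𝒜.val).codRestrict _ fun f _ _ => f.2

lemma exists_slice_eq_of_notMem [CompactSpace T] [T2Space T] (hT₀ : IsClosed T₀) {s : T}
    (hs : s ∉ T₀) (g : C(K, ℂ)) :
    ∃ f : sliceAlgebra 𝒜 T₀, (f : C(T × K, ℂ)).comp (sliceMap K s) = g := by
  obtain ⟨ρ, hρ₀, hρ₁, -⟩ := exists_continuous_zero_one_of_isClosed hT₀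
    (isClosed_singleton (x := s)) (Set.disjoint_singleton_right.2 hs)
  have hρs : ρ s = 1 := hρ₁ rfl
  refine ⟨⟨⟨fun p => (ρ p.1 : ℂ) * g p.2, by fun_prop⟩, fun s' hs' => ?_⟩, ?_⟩
  · have hρs' : ρ s' = 0 := hρ₀ hs'
    convert 𝒜.zero_mem
    ext z
    simp [sliceMap, hρs']
  · ext z
    simp [sliceMap, hρs]

/-- The supremum norms of the slices of a function on `T × K`, as a function of the slice. -/
noncomputable def sliceNorm [CompactSpace K] (f : C(T × K, ℂ)) : C(T, ℝ) :=
  ⟨fun s => ‖f.curry s‖, by fun_prop⟩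

section SliceNorm

variable [CompactSpace K] (f : C(T × K, ℂ))

lemma norm_le_sliceNorm (p : T × K) : ‖f p‖ ≤ sliceNorm f p.1 :=
  ContinuousMap.norm_coe_le_norm (f.curry p.1) p.2

lemma sliceNorm_nonneg (s : T) : 0 ≤ sliceNorm f s := norm_nonneg (f.curry s)

variable {f} in
lemma sliceNorm_eq_zero {s : T} (h : ∀ z, f (s, z) = 0) : sliceNorm f s = 0 := by
  change ‖f.curry s‖ = 0
  exact norm_eq_zero.2 (ContinuousMap.ext h)

end SliceNorm

/-- The cut-off function `ε / (ε + g)`: it equals `1` on the zero set of `g`, and its product with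
anything dominated by `g` is bounded by `ε`. -/
noncomputable def cutoff (g : C(T, ℝ)) (hg : ∀ s, 0 ≤ g s) {ε : ℝ} (hε : 0 < ε) : C(T, ℂ) :=
  ⟨fun s => ((ε / (ε + g s) : ℝ) : ℂ),
    Complex.continuous_ofReal.comp (continuous_const.div (by fun_prop) fun s =>
      (add_pos_of_pos_of_nonneg hε (hg s)).ne')⟩

lemma norm_cutoff_mul_le {g : C(T, ℝ)} (hg : ∀ s, 0 ≤ g s) {ε : ℝ} (hε : 0 < ε) {s : T} {c : ℂ}
    (hc : ‖c‖ ≤ g s) : ‖cutoff g hg hε s * c‖ ≤ ε := by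
  have hpos : 0 < ε + g s := add_pos_of_pos_of_nonneg hε (hg s)
  change ‖((ε / (ε + g s) : ℝ) : ℂ) * c‖ ≤ ε
  rw [norm_mul, Complex.norm_of_nonneg (by positivity), div_mul_eq_mul_div, div_le_iff₀ hpos]
  nlinarith

lemma norm_one_sub_cutoff_le {g : C(T, ℝ)} (hg : ∀ s, 0 ≤ g s) {ε : ℝ} (hε : 0 < ε) (s : T) :
    ‖1 - cutoff g hg hε s‖ ≤ 1 := by
  have hgs := hg s
  have hle : ε / (ε + g s) ≤ 1 := (div_le_one (by positivity)).2 (by linarith)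
  have hnonneg : 0 ≤ ε / (ε + g s) := by positivity
  change ‖(1 : ℂ) - ((ε / (ε + g s) : ℝ) : ℂ)‖ ≤ 1
  rw [← Complex.ofReal_one, ← Complex.ofReal_sub, Complex.norm_of_nonneg (by linarith)]
  linarith

lemma cutoff_eq_one {g : C(T, ℝ)} (hg : ∀ s, 0 ≤ g s) {ε : ℝ} (hε : 0 < ε) {s : T}
    (hs : g s = 0) : cutoff g hg hε s = 1 := by
  change ((ε / (ε + g s) : ℝ) : ℂ) = 1
  rw [hs, add_zero, div_self hε.ne', Complex.ofReal_one]

variable [CompactSpace T] [CompactSpace K]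

lemma algHom_eq_zero_of_slice_eq_zero {χ : sliceAlgebra 𝒜 T₀ →ₐ[ℂ] ℂ}
    (h𝒜 : IsClosed (𝒜 : Set C(K, ℂ))) {s : T} (hs : ∀ f, χ (ofBase 𝒜 T₀ f) = f s)
    {f : sliceAlgebra 𝒜 T₀} (hf : ∀ z, (f : C(T × K, ℂ)) (s, z) = 0) : χ f = 0 := by
  have : CompleteSpace (sliceAlgebra 𝒜 T₀) := (isClosed_sliceAlgebra h𝒜).completeSpace_coe
  have hnorm := sliceNorm_nonneg (f : C(T × K, ℂ))
  refine norm_le_zero_iff.1 (le_of_forall_gt_imp_ge_of_dense fun ε hε => ?_)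
  set ρ := ofBase 𝒜 T₀ (cutoff (sliceNorm (f : C(T × K, ℂ))) hnorm hε)
  have hρ : χ (ρ * f) = χ f := by
    rw [map_mul, hs, cutoff_eq_one hnorm hε (sliceNorm_eq_zero hf), one_mul]
  have hρf : ‖ρ * f‖ ≤ ε := (ContinuousMap.norm_le _ hε.le).2 fun p =>
    norm_cutoff_mul_le hnorm hε (norm_le_sliceNorm _ p)
  rw [← hρ]
  exact (AlgHom.norm_apply_le_self_mul_norm_one χ _).trans
    ((mul_le_of_le_one_right (norm_nonneg _) (norm_one_subalgebra_le _)).trans hρf)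

lemma algHom_congr_of_slice {χ : sliceAlgebra 𝒜 T₀ →ₐ[ℂ] ℂ}
    (h𝒜 : IsClosed (𝒜 : Set C(K, ℂ))) {s : T} (hs : ∀ f, χ (ofBase 𝒜 T₀ f) = f s)
    {f g : sliceAlgebra 𝒜 T₀} (hfg : ∀ z, (f : C(T × K, ℂ)) (s, z) = (g : C(T × K, ℂ)) (s, z)) :
    χ f = χ g := by
  rw [← sub_eq_zero, ← map_sub]
  exact algHom_eq_zero_of_slice_eq_zero h𝒜 hs fun z => sub_eq_zero.2 (hfg z)

lemma isNatural_sliceAlgebra [T2Space T] [T2Space K] (h𝒜 : IsNatural 𝒜) (hT₀ : IsClosed T₀) :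
    IsNatural (sliceAlgebra 𝒜 T₀) := by
  refine ⟨isClosed_sliceAlgebra h𝒜.isClosed, fun χ => ?_⟩
  obtain ⟨s, hs⟩ := exists_eval_of_algHom (χ.comp (ofBase 𝒜 T₀))
  have hcongr {f g} := algHom_congr_of_slice (f := f) (g := g) h𝒜.isClosed hs
  by_cases hsT₀ : s ∈ T₀
  · obtain ⟨z, hz⟩ := h𝒜.exists_eval (χ.comp (ofFiber 𝒜 T₀))
    exact ⟨(s, z), fun f => (hcongr (f := f) (g := ofFiber 𝒜 T₀ ⟨_, f.2 s hsT₀⟩)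
      fun _ => rfl).trans (hz _)⟩
  · obtain ⟨ψ, rfl⟩ := exists_comp_eq_of_surjective (χ := χ)
      (r := (ContinuousMap.compRightAlgHom ℂ ℂ (sliceMap K s)).comp (sliceAlgebra 𝒜 T₀).val)
      (exists_slice_eq_of_notMem hT₀ hsT₀)
      fun f hf => algHom_eq_zero_of_slice_eq_zero h𝒜.isClosed hs fun z => DFunLike.congr_fun hf z
    obtain ⟨z, hz⟩ := exists_eval_of_algHom ψ
    exact ⟨(s, z), fun f => hz _⟩

end SliceAlgebra

/-! ### Matrices over slice algebras -/

section ColumnIdeal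

variable {S : Type*} [CommRing S] {ι : Type*} [Fintype ι] [DecidableEq ι]
  {I : Ideal S} {s : Set ι}

variable (I s) in
/-- The left ideal of the matrices with entries in `I` that vanish in the columns `s`. Adding an
element of it to a matrix keeps these columns, and the whole matrix modulo `I`. -/
def columnIdeal : Ideal (Matrix ι ι S) where
  carrier := {x | ∀ i j, x i j ∈ I ∧ (j ∈ s → x i j = 0)}
  zero_mem' _ _ := ⟨I.zero_mem, fun _ => rfl⟩
  add_mem' hx hy i j := ⟨I.add_mem (hx i j).1 (hy i j).1, fun hj => by
    rw [Matrix.add_apply, (hx i j).2 hj, (hy i j).2 hj, add_zero]⟩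
  smul_mem' c x hx i j := by
    rw [smul_eq_mul, Matrix.mul_apply]
    exact ⟨I.sum_mem fun k _ => I.mul_mem_left _ (hx k j).1,
      fun hj => Finset.sum_eq_zero fun k _ => by rw [(hx k j).2 hj, mul_zero]⟩

lemma smul_mul_diagonal_mem_columnIdeal {θ : S} (hθ : θ ∈ I) (x : Matrix ι ι S) :
    θ • (x * Matrix.diagonal (sᶜ.indicator 1)) ∈ columnIdeal I s := fun i j => by
  rw [Matrix.smul_apply, Matrix.mul_diagonal]
  exact ⟨I.mul_mem_right _ hθ, fun hj => by simp [hj]⟩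

lemma mul_diagonal_eq_of_mem_columnIdeal {x : Matrix ι ι S} (hx : x ∈ columnIdeal I s) :
    x * Matrix.diagonal (sᶜ.indicator 1) = x := by
  ext i j
  by_cases hj : j ∈ s
  · simp [Matrix.mul_diagonal, hj, (hx i j).2 hj]
  · simp [Matrix.mul_diagonal, hj]

end ColumnIdeal

section ApproxUnit

variable {S : Type*} [NormedCommRing S] {ι : Type*} [Fintype ι] [DecidableEq ι]
  {I : Ideal S} {s : Set ι}

/-- The ideal `I` has contractive multipliers approximating the identity on its finite subsets. -/
def HasApproxUnit (I : Ideal S) : Prop :=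
  ∀ F : Finset S, ↑F ⊆ (I : Set S) → ∀ ε > 0, ∃ θ ∈ I, ‖θ‖ ≤ 1 ∧ ∀ x ∈ F, ‖x - θ * x‖ ≤ ε

lemma norm_matrix_le {x : Matrix ι ι S} {ε : ℝ} (hε : 0 ≤ ε) (h : ∀ i j, ‖x i j‖ ≤ ε) :
    ‖x‖ ≤ Fintype.card ι * ε := by
  lift ε to NNReal using hε
  rw [← coe_nnnorm, Matrix.linfty_opNNNorm_def]
  have : (Finset.univ.sup fun i => ∑ j, ‖x i j‖₊) ≤ Fintype.card ι * ε :=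
    Finset.sup_le fun i _ => (Finset.sum_le_card_nsmul _ _ ε fun j _ => h i j).trans_eq (by simp)
  exact_mod_cast this

lemma HasApproxUnit.exists_norm_sub_smul_le (hI : HasApproxUnit I) {x : Matrix ι ι S}
    (hx : x ∈ columnIdeal I s) {ε : ℝ} (hε : 0 < ε) : ∃ θ ∈ I, ‖θ‖ ≤ 1 ∧ ‖x - θ • x‖ ≤ ε := by
  classical
  obtain ⟨θ, hθI, hθ, hθx⟩ := hI (Finset.univ.image fun ij : ι × ι => x ij.1 ij.2)
    (by simpa [Set.range_subset_iff] using fun i j => (hx i j).1) (ε / (Fintype.card ι + 1))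
    (by positivity)
  refine ⟨θ, hθI, hθ, (norm_matrix_le (by positivity) fun i j =>
    hθx _ (Finset.mem_image_of_mem _ (Finset.mem_univ (i, j)))).trans ?_⟩
  rw [mul_div_assoc', div_le_iff₀ (by positivity)]
  nlinarith

theorem HasApproxUnit.hasSplitting (hI : HasApproxUnit I) (hone : ‖(1 : S)‖ ≤ 1)
    {M₁ M₂ M₁₂ : Submonoid S} (hM : ∀ m ∈ M₁₂, m ∈ M₁ ∨ m ∈ M₂) :
    HasSplitting (monoidSeminorm (Matrix ι ι S) M₁) (monoidSeminorm (Matrix ι ι S) M₂)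
      (monoidSeminorm (Matrix ι ι S) M₁₂) (columnIdeal I s) := by
  intro x hx c hc
  obtain ⟨r, hr, hrc⟩ := exists_between hc
  obtain ⟨x₁, x₂, rfl, h₁, h₂⟩ := (isMonoidSum_of_monoidSeminorm_lt hr).exists_add hM
  obtain ⟨θ, hθI, hθ, hθx⟩ := hI.exists_norm_sub_smul_le hx (half_pos (sub_pos.2 hrc))
  set D : Matrix ι ι S := Matrix.diagonal (sᶜ.indicator 1)
  have hD : ‖D‖ ≤ 1 := by
    rw [Matrix.linfty_opNorm_diagonal]
    refine (pi_norm_le_iff_of_nonneg zero_le_one).2 fun j => ?_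
    by_cases hj : j ∈ s <;> simp [hj, hone]
  have hmem (y : Matrix ι ι S) : θ • (y * D) ∈ columnIdeal I s :=
    smul_mul_diagonal_mem_columnIdeal hθI y
  have hsum {M : Submonoid S} {y : Matrix ι ι S} (hy : IsMonoidSum M y r) :
      IsMonoidSum M (θ • (y * D)) r := by
    rw [← one_mul r]
    refine hy.map ((DistribSMul.toAddMonoidHom _ θ).comp (AddMonoidHom.mulRight D)) zero_le_one
      (fun m c => ?_) (fun c => ?_)
    · simp only [AddMonoidHom.comp_apply, AddMonoidHom.mulRight_apply, Matrix.smul_mul,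
        DistribSMul.toAddMonoidHom_apply]
      exact smul_comm _ _ _
    · rw [one_mul]
      refine (norm_smul_le θ (c * D)).trans ((mul_le_of_le_one_left (norm_nonneg _) hθ).trans ?_)
      exact (norm_mul_le c D).trans (mul_le_of_le_one_right (norm_nonneg _) hD)
  have hθD : θ • (x₁ * D) + θ • (x₂ * D) = θ • (x₁ + x₂) := by
    rw [← smul_add, ← add_mul, mul_diagonal_eq_of_mem_columnIdeal hx]
  refine ⟨θ • (x₁ * D) + (x₁ + x₂ - θ • (x₁ + x₂)), ?_, θ • (x₂ * D), hmem _, ?_, ?_, ?_⟩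
  · rw [← hθD]
    exact add_mem (hmem _) (sub_mem hx (add_mem (hmem _) (hmem _)))
  · rw [← hθD]; abel
  · have := ((hsum h₁).add (.self (x₁ + x₂ - θ • (x₁ + x₂)))).monoidSeminorm_le
    linarith
  · exact (hsum h₂).monoidSeminorm_le.trans_lt hrc

theorem HasApproxUnit.exists_glue [NormedAlgebra ℂ S] [CompleteSpace S] (hI : HasApproxUnit I)
    (hone : ‖(1 : S)‖ ≤ 1) {M₁ M₂ M₁₂ : Submonoid S} (h₁ : M₁ ≤ M₁₂) (h₂ : M₂ ≤ M₁₂)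
    (hM : ∀ m ∈ M₁₂, m ∈ M₁ ∨ m ∈ M₂)
    (hpath : IsPathConnectedToOne (monoidSeminorm (Matrix ι ι S) M₁₂) (columnIdeal I s))
    {G₀ G₁ G₂ : Matrix ι ι S} (hN₁ : G₁ - G₀ ∈ columnIdeal I s)
    (hN₂ : G₂ - G₀ ∈ columnIdeal I s)
    (hG₁ : ApproxInvertible (monoidSeminorm (Matrix ι ι S) M₁) G₁)
    (hG₂ : ApproxInvertible (monoidSeminorm (Matrix ι ι S) M₂) G₂) :
    ∃ G, G - G₀ ∈ columnIdeal I s ∧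
      ApproxLeftInvertible (monoidSeminorm (Matrix ι ι S) M₁) G ∧
      ApproxLeftInvertible (monoidSeminorm (Matrix ι ι S) M₂) G := by
  have : @CompleteSpace (Matrix ι ι S) PseudoMetricSpace.toUniformSpace :=
    inferInstanceAs (CompleteSpace (ι → ι → S))
  obtain ⟨G, hGN, hG⟩ := (hI.hasSplitting hone hM).exists_glue hpath (norm_matrix_one_le hone)
    monoidSeminorm_le_norm monoidSeminorm_le_norm (monoidSeminorm_anti h₁)
    (monoidSeminorm_anti h₂) (by simpa using sub_mem hN₂ hN₁) hG₁ hG₂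
  exact ⟨G, by simpa using add_mem hGN hN₁, hG⟩

end ApproxUnit

section VanishingIdeal

variable {T K : Type*} [TopologicalSpace T] [TopologicalSpace K] {𝒜 : Subalgebra ℂ C(K, ℂ)}
  {T₀ : Set T}

variable (𝒜 T₀) in
/-- The functions of the slice algebra that vanish over `J`. -/
def vanishingIdeal (J : Set T) : Ideal (sliceAlgebra 𝒜 T₀) where
  carrier := {f | ∀ p, p.1 ∈ J → (f : C(T × K, ℂ)) p = 0}
  zero_mem' _ _ := rfl
  add_mem' {f g} hf hg p hp := by simp [hf p hp, hg p hp]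
  smul_mem' c f hf p hp := by simp [hf p hp]

theorem hasApproxUnit_vanishingIdeal [CompactSpace T] [CompactSpace K] (J : Set T) :
    HasApproxUnit (vanishingIdeal 𝒜 T₀ J) := by
  intro F hF ε hε
  set g : C(T, ℝ) := ∑ f ∈ F, sliceNorm (f : C(T × K, ℂ)) with hg_def
  have hgt (t : T) : g t = ∑ f ∈ F, sliceNorm (f : C(T × K, ℂ)) t := by simp [hg_def]
  have hg (t : T) : 0 ≤ g t := by
    rw [hgt]
    exact Finset.sum_nonneg fun f _ => sliceNorm_nonneg _ t
  refine ⟨1 - ofBase 𝒜 T₀ (cutoff g hg hε), fun p hp => ?_, ?_, fun f hf => ?_⟩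
  · have hgp : g p.1 = 0 := (hgt _).trans <| Finset.sum_eq_zero fun f hf =>
      sliceNorm_eq_zero fun z => hF hf (p.1, z) hp
    simp [cutoff_eq_one hg hε hgp]
  · exact (ContinuousMap.norm_le _ zero_le_one).2 fun p => norm_one_sub_cutoff_le hg hε p.1
  · refine (ContinuousMap.norm_le _ hε.le).2 fun p => ?_
    have hfg : ‖(f : C(T × K, ℂ)) p‖ ≤ g p.1 := (norm_le_sliceNorm _ p).trans <| by
      rw [hgt]
      exact Finset.single_le_sum (f := fun f : sliceAlgebra 𝒜 T₀ =>
        sliceNorm (f : C(T × K, ℂ)) p.1) (fun f _ => sliceNorm_nonneg _ _) hf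
    rw [sub_mul, one_mul, sub_sub_cancel]
    exact norm_cutoff_mul_le hg hε hfg

end VanishingIdeal

section Evaluation

variable {T K : Type*} [TopologicalSpace T] [TopologicalSpace K] {𝒜 : Subalgebra ℂ C(K, ℂ)}
  {T₀ J : Set T} {ι : Type*} [Fintype ι] [DecidableEq ι] {s : Set ι}

/-- The value at a point of a matrix of functions. -/
noncomputable def evalMatrix (p : T × K) :
    Matrix ι ι (sliceAlgebra 𝒜 T₀) →ₐ[ℂ] Matrix ι ι ℂ :=
  (evalChar _ p).mapMatrix

lemma evalMatrix_ext {x y : Matrix ι ι (sliceAlgebra 𝒜 T₀)}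
    (h : ∀ p, evalMatrix p x = evalMatrix p y) : x = y := by
  ext i j p
  exact congrFun (congrFun (h p) i) j

lemma continuous_det_evalMatrix (x : Matrix ι ι (sliceAlgebra 𝒜 T₀)) :
    Continuous fun p : T × K => (evalMatrix p x).det :=
  Continuous.matrix_det (continuous_matrix fun i j => (x i j : C(T × K, ℂ)).continuous)

lemma sub_mem_columnIdeal_iff {x y : Matrix ι ι (sliceAlgebra 𝒜 T₀)} :
    x - y ∈ columnIdeal (vanishingIdeal 𝒜 T₀ J) s ↔
      ∀ p i j, j ∈ s ∨ p.1 ∈ J → evalMatrix p x i j = evalMatrix p y i j := by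
  simp only [← sub_eq_zero (a := evalMatrix _ x _ _)]
  refine ⟨fun h p i j hp => ?_, fun h i j => ⟨fun p hp => h p i j (.inr hp), fun hj => ?_⟩⟩
  · rcases hp with hj | hp
    · exact DFunLike.congr_fun (congrArg Subtype.val ((h i j).2 hj)) p
    · exact (h i j).1 p hp
  · ext p
    exact h p i j (.inl hj)

/-- The set where all elements of the monoid `M` are bounded by `1`. -/
def sublevel (M : Submonoid 𝒜) : Set K := {z | ∀ m ∈ M, ‖(m : C(K, ℂ)) z‖ ≤ 1}

lemma isClosed_sublevel (M : Submonoid 𝒜) : IsClosed (sublevel M) := by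
  simp only [sublevel, Set.ofPred_forall]
  exact isClosed_biInter fun m _ => isClosed_le (by fun_prop) continuous_const

variable [CompactSpace T] [CompactSpace K]

lemma ApproxLeftInvertible.det_evalMatrix_ne_zero {M : Submonoid 𝒜}
    {G : Matrix ι ι (sliceAlgebra 𝒜 T₀)}
    (hG : ApproxLeftInvertible (monoidSeminorm (Matrix ι ι (sliceAlgebra 𝒜 T₀))
      (M.map (ofFiber 𝒜 T₀))) G) {p : T × K} (hp : p.2 ∈ sublevel M) :
    (evalMatrix p G).det ≠ 0 :=
  hG.det_ne_zero (norm_evalChar_apply_le p) (Set.forall_mem_image.2 hp)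

lemma approxInvertible_of_det_evalMatrix_ne_zero [T2Space T] [T2Space K] (h𝒜 : IsNatural 𝒜)
    (hT₀ : IsClosed T₀) {M : Submonoid 𝒜} {G : Matrix ι ι (sliceAlgebra 𝒜 T₀)}
    (hG : ∀ p, p.2 ∈ sublevel M → (evalMatrix p G).det ≠ 0) :
    ApproxInvertible (monoidSeminorm (Matrix ι ι (sliceAlgebra 𝒜 T₀))
      (M.map (ofFiber 𝒜 T₀))) G := by
  have hnat := isNatural_sliceAlgebra h𝒜 hT₀
  have : CompleteSpace (sliceAlgebra 𝒜 T₀) := hnat.isClosed.completeSpace_coe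
  refine approxInvertible_of_det_ne_zero (norm_one_subalgebra_le _) fun χ hχ => ?_
  obtain ⟨p, hp⟩ := hnat.exists_eval χ
  obtain rfl : χ = evalChar _ p := AlgHom.ext hp
  exact hG p fun m hm => hχ _ (Submonoid.mem_map_of_mem (ofFiber 𝒜 T₀) hm)

end Evaluation

/-! ### Completion over cylinders -/

section CompletesOver

variable {T K : Type*} [TopologicalSpace T] [TopologicalSpace K]
  {𝒜 : Subalgebra ℂ C(K, ℂ)} {T₀ J : Set T} {ι : Type*} [Fintype ι] [DecidableEq ι] {s : Set ι}
  {G₀ : Matrix ι ι (sliceAlgebra 𝒜 T₀)}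

/-- The matrix `G₀` can be made invertible over `T × X` by changing it neither in the columns `s`
nor over `J`. -/
def CompletesOver (s : Set ι) (J : Set T) (G₀ : Matrix ι ι (sliceAlgebra 𝒜 T₀)) (X : Set K) :
    Prop :=
  ∃ G, G - G₀ ∈ columnIdeal (vanishingIdeal 𝒜 T₀ J) s ∧
    ∀ p, p.2 ∈ X → (evalMatrix p G).det ≠ 0

lemma CompletesOver.mono {X X' : Set K} (h : CompletesOver s J G₀ X) (hX : X' ⊆ X) :
    CompletesOver s J G₀ X' :=
  let ⟨G, hG, hdet⟩ := h
  ⟨G, hG, fun p hp => hdet p (hX hp)⟩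

variable [CompactSpace T] [CompactSpace K]

variable (𝒜 T₀) in
/-- Every invertible matrix over `T × X` that is the identity in the columns `s` and over `J` is
joined to the identity by a path of such matrices. -/
def HasPathsToOne (s : Set ι) (J : Set T) (X : Set K) : Prop :=
  ∀ h : Matrix ι ι (sliceAlgebra 𝒜 T₀),
    (∀ p i j, j ∈ s ∨ p.1 ∈ J → evalMatrix p h i j = (1 : Matrix ι ι ℂ) i j) →
    (∀ p, p.2 ∈ X → (evalMatrix p h).det ≠ 0) →
    ∃ Γ : unitInterval → Matrix ι ι (sliceAlgebra 𝒜 T₀), Continuous Γ ∧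
      (∀ u p i j, j ∈ s ∨ p.1 ∈ J → evalMatrix p (Γ u) i j = (1 : Matrix ι ι ℂ) i j) ∧
      (∀ u p, p.2 ∈ X → (evalMatrix p (Γ u)).det ≠ 0) ∧
      (∀ p, evalMatrix p (Γ 0) = 1) ∧ ∀ p, evalMatrix p (Γ 1) = evalMatrix p h

lemma HasPathsToOne.isPathConnectedToOne [T2Space T] [T2Space K] (h𝒜 : IsNatural 𝒜)
    (hT₀ : IsClosed T₀) {M : Submonoid 𝒜} (H : HasPathsToOne 𝒜 T₀ s J (sublevel M)) :
    IsPathConnectedToOne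
      (monoidSeminorm (Matrix ι ι (sliceAlgebra 𝒜 T₀)) (M.map (ofFiber 𝒜 T₀)))
      (columnIdeal (vanishingIdeal 𝒜 T₀ J) s) := by
  intro h hN hh
  simp only [sub_mem_columnIdeal_iff, map_one] at hN ⊢
  obtain ⟨Γ, hΓ, hΓN, hdet, h₀, h₁⟩ := H h hN fun p => hh.det_evalMatrix_ne_zero
  exact ⟨Γ, hΓ, hΓN, fun u =>
    (approxInvertible_of_det_evalMatrix_ne_zero h𝒜 hT₀ (hdet u)).approxLeftInvertible,
    evalMatrix_ext fun p => (h₀ p).trans (map_one _).symm, evalMatrix_ext h₁⟩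

theorem CompletesOver.union [T2Space T] [T2Space K] (h𝒜 : IsNatural 𝒜)
    (hT₀ : IsClosed T₀) {M₁ M₂ M₁₂ : Submonoid 𝒜} (h₁ : M₁ ≤ M₁₂) (h₂ : M₂ ≤ M₁₂)
    (hM : ∀ m ∈ M₁₂, m ∈ M₁ ∨ m ∈ M₂) (hpath : HasPathsToOne 𝒜 T₀ s J (sublevel M₁₂))
    (hG₁ : CompletesOver s J G₀ (sublevel M₁)) (hG₂ : CompletesOver s J G₀ (sublevel M₂)) :
    CompletesOver s J G₀ (sublevel M₁ ∪ sublevel M₂) := by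
  have : CompleteSpace (sliceAlgebra 𝒜 T₀) :=
    (isClosed_sliceAlgebra h𝒜.isClosed).completeSpace_coe
  obtain ⟨G₁, hG₁N, hG₁⟩ := hG₁
  obtain ⟨G₂, hG₂N, hG₂⟩ := hG₂
  have hmap : ∀ m ∈ M₁₂.map (ofFiber 𝒜 T₀),
      m ∈ M₁.map (ofFiber 𝒜 T₀) ∨ m ∈ M₂.map (ofFiber 𝒜 T₀) :=
    Set.forall_mem_image.2 fun m hm =>
      (hM m hm).imp (Submonoid.mem_map_of_mem _) (Submonoid.mem_map_of_mem _)
  have hI := hasApproxUnit_vanishingIdeal (𝒜 := 𝒜) (T₀ := T₀) J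
  have hconn := hpath.isPathConnectedToOne h𝒜 hT₀
  obtain ⟨G, hGN, hl₁, hl₂⟩ := hI.exists_glue (norm_one_subalgebra_le (sliceAlgebra 𝒜 T₀))
    (Submonoid.monotone_map h₁) (Submonoid.monotone_map h₂) hmap hconn hG₁N hG₂N
    (approxInvertible_of_det_evalMatrix_ne_zero h𝒜 hT₀ hG₁)
    (approxInvertible_of_det_evalMatrix_ne_zero h𝒜 hT₀ hG₂)
  refine ⟨G, hGN, fun p hp => ?_⟩
  rcases hp with hp | hp
  · exact hl₁.det_evalMatrix_ne_zero hp
  · exact hl₂.det_evalMatrix_ne_zero hp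

end CompletesOver

section Pullback

variable {T T' K : Type*} [TopologicalSpace T] [TopologicalSpace T'] [TopologicalSpace K]
  {𝒜 : Subalgebra ℂ C(K, ℂ)} {T₀ : Set T} {T₀' : Set T'}

/-- The homomorphism of slice algebras induced by a map of the parameter spaces. -/
noncomputable def slicePullback (φ : C(T', T)) (hφ : Set.MapsTo φ T₀' T₀) :
    sliceAlgebra 𝒜 T₀ →ₐ[ℂ] sliceAlgebra 𝒜 T₀' :=
  ((ContinuousMap.compRightAlgHom ℂ ℂ (φ.prodMap (ContinuousMap.id K))).comp
    (sliceAlgebra 𝒜 T₀).val).codRestrict _ fun f s hs => f.2 (φ s) (hφ hs)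

lemma evalMatrix_mapMatrix_slicePullback {ι : Type*} [Fintype ι] [DecidableEq ι] (φ : C(T', T))
    (hφ : Set.MapsTo φ T₀' T₀) (x : Matrix ι ι (sliceAlgebra 𝒜 T₀)) (p : T' × K) :
    evalMatrix p ((slicePullback φ hφ).mapMatrix x) = evalMatrix (φ p.1, p.2) x := rfl

end Pullback

section Cylinder

variable {K : Type*} [TopologicalSpace K] {𝒜 : Subalgebra ℂ C(K, ℂ)}
  {ι : Type*} [Fintype ι] [DecidableEq ι] {s : Set ι}

/-- The bottom of the cylinder over `Y`. -/
def bottom (Y : Type*) : Set (Y × unitInterval) := {q | q.2 = 0}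

/-- The part of the boundary of the cylinder over `Y` consisting of its top and of the wall
over `Z`. -/
def topAndWall {Y : Type*} (Z : Set Y) : Set (Y × unitInterval) := {q | q.1 ∈ Z ∨ q.2 = 1}

lemma isClosed_bottom (Y : Type*) [TopologicalSpace Y] : IsClosed (bottom Y) :=
  isClosed_eq continuous_snd continuous_const

/-- The relative homotopy form of the completion problem over `X ⊆ K`. Matrices over
`Y × [0, 1] × K` stand for homotopies that start, at `t = 0`, with matrices over `𝒜`; if the
columns `s` are independent over `X` and the matrix is already invertible on the top and on the
wall over a closed set `Z ⊆ Y`, then it can be completed over `X` relative to these. -/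
def HasCylinderCompletion (𝒜 : Subalgebra ℂ C(K, ℂ)) (s : Set ι) (X : Set K) : Prop :=
  ∀ (Y : Type) [TopologicalSpace Y] [CompactSpace Y] [T2Space Y] (Z : Set Y), IsClosed Z →
    ∀ G₀ : Matrix ι ι (sliceAlgebra 𝒜 (bottom Y)),
      (∀ p, p.2 ∈ X → LinearIndepOn ℂ (evalMatrix p G₀).col s) →
      (∀ p, p.1 ∈ topAndWall Z → p.2 ∈ X → (evalMatrix p G₀).det ≠ 0) →
      CompletesOver s (topAndWall Z) G₀ X

variable {Y : Type*} [TopologicalSpace Y]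

lemma exists_linear_homotopy (h : Matrix ι ι (sliceAlgebra 𝒜 (bottom Y))) :
    ∃ W : Matrix ι ι (sliceAlgebra 𝒜 (bottom (Y × unitInterval))), ∀ y u t z,
      evalMatrix (((y, u), t), z) W = 1 + ((u : ℝ) : ℂ) • (evalMatrix ((y, t), z) h - 1) := by
  let w : C((Y × unitInterval) × unitInterval, ℂ) := ⟨fun q => ((q.1.2 : ℝ) : ℂ), by fun_prop⟩
  let π : C((Y × unitInterval) × unitInterval, Y × unitInterval) :=
    ⟨fun q => (q.1.1, q.2), by fun_prop⟩
  have hπ : Set.MapsTo π (bottom (Y × unitInterval)) (bottom Y) := fun _ hq => hq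
  refine ⟨1 + Matrix.scalar ι (ofBase 𝒜 (bottom (Y × unitInterval)) w) *
    (slicePullback π hπ).mapMatrix (h - 1), fun y u t z => ?_⟩
  have h_sub : evalMatrix ((y, t), z) (h - 1) = evalMatrix ((y, t), z) h - 1 := by
    rw [← map_one (evalMatrix ((y, t), z)), ← map_sub]
  have h_scalar : evalMatrix (((y, u), t), z) (Matrix.scalar ι (ofBase 𝒜
      (bottom (Y × unitInterval)) w)) = Matrix.scalar ι ((u : ℝ) : ℂ) := by
    rw [Matrix.scalar_apply, Matrix.scalar_apply, evalMatrix, AlgHom.mapMatrix_apply,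
      Matrix.diagonal_map (map_zero _)]
    rfl
  rw [map_add, map_one, map_mul, evalMatrix_mapMatrix_slicePullback, h_scalar,
    Matrix.scalar_apply, ← Matrix.smul_eq_diagonal_mul]
  exact congrArg (fun x => 1 + ((u : ℝ) : ℂ) • x) h_sub

lemma exists_path_of_cylinder [CompactSpace Y] [CompactSpace K]
    (G : Matrix ι ι (sliceAlgebra 𝒜 (bottom (Y × unitInterval)))) :
    ∃ Γ : unitInterval → Matrix ι ι (sliceAlgebra 𝒜 (bottom Y)), Continuous Γ ∧
      ∀ u y t z, evalMatrix ((y, t), z) (Γ u) = evalMatrix (((y, u), t), z) G := by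
  let σ (u : unitInterval) : C(Y × unitInterval, (Y × unitInterval) × unitInterval) :=
    ⟨fun q => ((q.1, u), q.2), by fun_prop⟩
  have hσ (u) : Set.MapsTo (σ u) (bottom Y) (bottom (Y × unitInterval)) := fun _ hq => hq
  refine ⟨fun u => (slicePullback (σ u) (hσ u)).mapMatrix G,
    continuous_matrix fun i j => continuous_induced_rng.2 ?_, fun u y t z => rfl⟩
  let F : C(unitInterval × ((Y × unitInterval) × K), ℂ) :=
    ⟨fun q => (G i j : C(_, ℂ)) (((q.2.1.1, q.1), q.2.1.2), q.2.2), by fun_prop⟩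
  exact F.curry.continuous

theorem HasCylinderCompletion.hasPathsToOne [CompactSpace K] {X : Set K}
    (hC : HasCylinderCompletion 𝒜 s X) {Y : Type}
    [TopologicalSpace Y] [CompactSpace Y] [T2Space Y] {Z : Set Y} (hZ : IsClosed Z) :
    HasPathsToOne 𝒜 (bottom Y) s (topAndWall Z) X := by
  intro h hN hh
  simp only [Prod.forall, topAndWall] at hN
  obtain ⟨W, hW⟩ := exists_linear_homotopy h
  have hW_one {y u t z i j} (hp : j ∈ s ∨ y ∈ Z ∨ t = 1) :
      evalMatrix (((y, u), t), z) W i j = (1 : Matrix ι ι ℂ) i j := by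
    rw [hW, Matrix.add_apply, Matrix.smul_apply, Matrix.sub_apply, hN _ _ _ _ _ hp, sub_self,
      smul_zero, add_zero]
  have hW_zero {y t z} : evalMatrix (((y, 0), t), z) W = 1 := by simp [hW]
  have hW_end {y t z} : evalMatrix (((y, 1), t), z) W = evalMatrix ((y, t), z) h := by simp [hW]
  obtain ⟨G, hGW, hG⟩ := hC (Y × unitInterval) {q | q.1 ∈ Z ∨ q.2 = 0 ∨ q.2 = 1}
    ((hZ.preimage continuous_fst).union ((isClosed_eq continuous_snd continuous_const).union
      (isClosed_eq continuous_snd continuous_const))) W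
    (fun p _ => ((Matrix.linearIndependent_cols_of_isUnit isUnit_one).linearIndepOn s).congr
      fun j hj => funext fun i => (hW_one (.inl hj)).symm)
    (by
      rintro ⟨⟨⟨y, u⟩, t⟩, z⟩ ((hy | rfl | rfl) | rfl) hz
      · rw [show evalMatrix _ W = 1 from Matrix.ext fun i j => hW_one (.inr (.inl hy))]
        simp
      · simp [hW_zero]
      · rw [hW_end]
        exact hh _ hz
      · rw [show evalMatrix _ W = 1 from Matrix.ext fun i j => hW_one (.inr (.inr rfl))]
        simp)
  rw [sub_mem_columnIdeal_iff] at hGW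
  obtain ⟨Γ, hΓ, hΓG⟩ := exists_path_of_cylinder G
  refine ⟨Γ, hΓ, fun u => ?_, fun u => ?_, ?_, ?_⟩
  · rintro ⟨⟨y, t⟩, z⟩ i j hp
    rw [hΓG, hGW _ _ _ (hp.imp_right (Or.imp_left .inl)), hW_one hp]
  · rintro ⟨⟨y, t⟩, z⟩ hp
    rw [hΓG]
    exact hG _ hp
  · rintro ⟨⟨y, t⟩, z⟩
    ext i j
    rw [hΓG, hGW _ _ _ (.inr (.inl (.inr (.inl rfl)))), hW_zero]
  · rintro ⟨⟨y, t⟩, z⟩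
    ext i j
    rw [hΓG, hGW _ _ _ (.inr (.inl (.inr (.inr rfl)))), hW_end]

end Cylinder

end OperatorNorm

/-! ### Cutting along level sets -/

lemma mem_sup_closure_or_of_mul_eq_one {S : Type*} [CommMonoid S] {M : Submonoid S} {b b' : S}
    (hb : b * b' = 1) {m : S} (hm : m ∈ M ⊔ Submonoid.closure {b, b'}) :
    m ∈ M ⊔ Submonoid.closure {b} ∨ m ∈ M ⊔ Submonoid.closure {b'} := by
  have mem_sup {m₀ c : S} (hm₀ : m₀ ∈ M) (l : ℕ) : m₀ * c ^ l ∈ M ⊔ Submonoid.closure {c} :=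
    Submonoid.mul_mem_sup hm₀ (pow_mem (Submonoid.mem_closure_singleton_self) l)
  obtain ⟨m₀, hm₀, y, hy, rfl⟩ := Submonoid.mem_sup.1 hm
  obtain ⟨i, j, rfl⟩ := (Submonoid.mem_closure_pair _ _ _).1 hy
  rcases le_total i j with h | h <;> obtain ⟨l, rfl⟩ := Nat.exists_eq_add_of_le h
  · refine .inr ?_
    rw [pow_add, ← mul_assoc (b ^ i), ← mul_pow, hb, one_pow, one_mul]
    exact mem_sup hm₀ l
  · refine .inl ?_
    rw [pow_add, mul_right_comm, ← mul_pow, hb, one_pow, one_mul]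
    exact mem_sup hm₀ l

lemma exists_algHom_apply_eq_exp {S : Type*} [NormedCommRing S] [NormedAlgebra ℂ S]
    [CompleteSpace S] (x : S) : ∃ e : S, ∀ χ : S →ₐ[ℂ] ℂ, χ e = Complex.exp (χ x) := by
  refine ⟨NormedSpace.exp x, fun χ => ?_⟩
  rw [NormedSpace.map_exp_of_mem_ball (𝕂 := ℂ) χ (map_continuous χ.toContinuousLinearMap) x
    ((NormedSpace.expSeries_radius_eq_top ℂ S).symm ▸ edist_lt_top _ _), Complex.exp_eq_exp_ℂ]

section Sublevel

variable {K : Type*} [TopologicalSpace K] {𝒜 : Subalgebra ℂ C(K, ℂ)}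

lemma mem_sublevel_sup_closure {M : Submonoid 𝒜} {B : Set 𝒜} {z : K} :
    z ∈ sublevel (M ⊔ Submonoid.closure B) ↔
      z ∈ sublevel M ∧ ∀ b ∈ B, ‖(b : C(K, ℂ)) z‖ ≤ 1 := by
  refine ⟨fun h => ⟨fun m hm => h m (le_sup_left (a := M) hm),
    fun b hb => h b (le_sup_right (a := M) (Submonoid.subset_closure hb))⟩, fun ⟨hM, hB⟩ => ?_⟩
  have hle : M ⊔ Submonoid.closure B ≤
      (Submonoid.unitClosedBall ℂ).comap (evalChar 𝒜 z : 𝒜 →* ℂ) :=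
    sup_le (fun m hm => by simpa using hM m hm)
      (Submonoid.closure_le.2 fun b hb => by simpa using hB b hb)
  exact fun m hm => by simpa using hle hm

variable [CompactSpace K]

lemma exists_norm_eq_exp (h𝒜 : IsClosed (𝒜 : Set C(K, ℂ))) (a : 𝒜) (τ : ℝ) :
    ∃ b b' : 𝒜, b * b' = 1 ∧
      (∀ z, ‖(b : C(K, ℂ)) z‖ = Real.exp (((a : C(K, ℂ)) z).re - τ)) ∧
      ∀ z, ‖(b' : C(K, ℂ)) z‖ = Real.exp (τ - ((a : C(K, ℂ)) z).re) := by
  have : CompleteSpace 𝒜 := h𝒜.completeSpace_coe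
  obtain ⟨b, hb⟩ := exists_algHom_apply_eq_exp (a - algebraMap ℂ 𝒜 τ)
  obtain ⟨b', hb'⟩ := exists_algHom_apply_eq_exp (algebraMap ℂ 𝒜 τ - a)
  have hbz (z) : (b : C(K, ℂ)) z = Complex.exp ((a : C(K, ℂ)) z - τ) := hb (evalChar 𝒜 z)
  have hbz' (z) : (b' : C(K, ℂ)) z = Complex.exp (τ - (a : C(K, ℂ)) z) := hb' (evalChar 𝒜 z)
  refine ⟨b, b', ?_, fun z => ?_, fun z => ?_⟩
  · ext z
    change (b : C(K, ℂ)) z * (b' : C(K, ℂ)) z = 1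
    rw [hbz, hbz', ← Complex.exp_add, sub_add_sub_cancel, sub_self, Complex.exp_zero]
  · simp [hbz, Complex.norm_exp]
  · simp [hbz', Complex.norm_exp]

lemma exists_sublevel_eq (h𝒜 : IsClosed (𝒜 : Set C(K, ℂ))) (M : Submonoid 𝒜) (a : 𝒜) (β : ℝ) :
    ∃ M₁ M₂ M₁₂ : Submonoid 𝒜, (M ≤ M₁ ∧ M ≤ M₂) ∧ (M₁ ≤ M₁₂ ∧ M₂ ≤ M₁₂) ∧
      (∀ m ∈ M₁₂, m ∈ M₁ ∨ m ∈ M₂) ∧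
      (∀ z, z ∈ sublevel M₁ ↔ z ∈ sublevel M ∧ ((a : C(K, ℂ)) z).re ≤ β) ∧
      (∀ z, z ∈ sublevel M₂ ↔ z ∈ sublevel M ∧ β ≤ ((a : C(K, ℂ)) z).re) ∧
      ∀ z, z ∈ sublevel M₁₂ ↔ z ∈ sublevel M ∧ ((a : C(K, ℂ)) z).re = β := by
  obtain ⟨b, b', hbb', hb, hb'⟩ := exists_norm_eq_exp h𝒜 a β
  refine ⟨M ⊔ Submonoid.closure {b}, M ⊔ Submonoid.closure {b'}, M ⊔ Submonoid.closure {b, b'},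
    ⟨le_sup_left, le_sup_left⟩, ⟨sup_le_sup_left (Submonoid.closure_mono (by simp)) _,
    sup_le_sup_left (Submonoid.closure_mono (by simp)) _⟩,
    fun m => mem_sup_closure_or_of_mul_eq_one hbb', fun z => ?_, fun z => ?_, fun z => ?_⟩ <;>
  simp [mem_sublevel_sup_closure, hb, hb', le_antisymm_iff]

end Sublevel

section LevelSets

variable {T K : Type*} [TopologicalSpace T] [CompactSpace T] [TopologicalSpace K] [CompactSpace K]
  {𝒜 : Subalgebra ℂ C(K, ℂ)} {T₀ J : Set T} {ι : Type*} [Fintype ι] [DecidableEq ι] {s : Set ι}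
  {G₀ : Matrix ι ι (sliceAlgebra 𝒜 T₀)}

lemma CompletesOver.exists_preimage_Icc {X : Set K} (hX : IsClosed X) {f : K → ℝ}
    (hf : Continuous f) {τ : ℝ} (h : CompletesOver s J G₀ (X ∩ f ⁻¹' {τ})) :
    ∃ δ > 0, CompletesOver s J G₀ (X ∩ f ⁻¹' Set.Icc (τ - δ) (τ + δ)) := by
  obtain ⟨G, hG, hdet⟩ := h
  let E : Set (T × K) := {p | p.2 ∈ X ∧ (evalMatrix p G).det = 0}
  have hE : IsClosed E := (hX.preimage continuous_snd).inter
    (isClosed_eq (continuous_det_evalMatrix G) continuous_const)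
  have hfE : IsClosed ((fun p => f p.2) '' E) := (hE.isCompact.image (by fun_prop)).isClosed
  obtain ⟨δ, hδ, hball⟩ := Metric.nhds_basis_closedBall.mem_iff.1 (hfE.isOpen_compl.mem_nhds
    (show τ ∈ ((fun p => f p.2) '' E)ᶜ from fun ⟨p, hp, hpτ⟩ => hdet p ⟨hp.1, hpτ⟩ hp.2))
  refine ⟨δ, hδ, G, hG, fun p hp h₀ => hball (a := f p.2) ?_ ⟨p, ⟨hp.1, h₀⟩, rfl⟩⟩
  rw [Real.closedBall_eq_Icc]
  exact hp.2

lemma CompletesOver.glue_Icc [T2Space T] [T2Space K] (h𝒜 : IsNatural 𝒜) (hT₀ : IsClosed T₀)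
    {M : Submonoid 𝒜} {a : 𝒜} {α β γ : ℝ}
    (hpath : ∀ M', M ≤ M' → (∃ τ : ℝ, ∀ z ∈ sublevel M', ((a : C(K, ℂ)) z).re = τ) →
      HasPathsToOne 𝒜 T₀ s J (sublevel M'))
    (h₁ : CompletesOver s J G₀ (sublevel M ∩ {z | ((a : C(K, ℂ)) z).re ∈ Set.Icc α β}))
    (h₂ : CompletesOver s J G₀ (sublevel M ∩ {z | ((a : C(K, ℂ)) z).re ∈ Set.Icc β γ})) :
    CompletesOver s J G₀ (sublevel M ∩ {z | ((a : C(K, ℂ)) z).re ∈ Set.Icc α γ}) := by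
  obtain ⟨-, Mα, -, ⟨-, hMα⟩, -, -, -, hα, -⟩ := exists_sublevel_eq h𝒜.isClosed M a α
  obtain ⟨Mγ, -, -, ⟨hMγ, -⟩, -, -, hγ, -⟩ := exists_sublevel_eq h𝒜.isClosed Mα a γ
  obtain ⟨M₁, M₂, M₁₂, ⟨hM₁, -⟩, ⟨hM₁₂, hM₂₁⟩, hM, h_le, h_ge, h_eq⟩ :=
    exists_sublevel_eq h𝒜.isClosed Mγ a β
  refine (CompletesOver.union h𝒜 hT₀ hM₁₂ hM₂₁ hM
    (hpath M₁₂ (hMα.trans (hMγ.trans (hM₁.trans hM₁₂))) ⟨β, fun z hz => ((h_eq z).1 hz).2⟩)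
    (h₁.mono fun z hz => ?_) (h₂.mono fun z hz => ?_)).mono fun z hz => ?_
  · rw [h_le, hγ, hα] at hz
    exact ⟨hz.1.1.1, hz.1.1.2, hz.2⟩
  · rw [h_ge, hγ, hα] at hz
    exact ⟨hz.1.1.1, hz.2, hz.1.2⟩
  · rw [Set.mem_union, h_le, h_ge, hγ, hα]
    exact (le_total _ β).imp (⟨⟨⟨hz.1, hz.2.1⟩, hz.2.2⟩, ·⟩) (⟨⟨⟨hz.1, hz.2.1⟩, hz.2.2⟩, ·⟩)

end LevelSets

lemma forall_Icc_of_forall_exists {P : ℝ → ℝ → Prop}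
    (mono : ∀ {α β α' β'}, α ≤ α' → β' ≤ β → P α β → P α' β')
    (exists_pos : ∀ τ, ∃ δ > 0, P (τ - δ) (τ + δ))
    (glue : ∀ {α β γ}, P α β → P β γ → P α γ) {a b : ℝ} (hab : a ≤ b) : P a b := by
  choose δ hδ hP using exists_pos
  obtain ⟨t, ht₀, ht_mono, ⟨n, htn⟩, ht⟩ := exists_monotone_Icc_subset_open_cover_Icc hab
    (c := fun τ => {x : Set.Icc a b | (x : ℝ) ∈ Set.Ioo (τ - δ τ) (τ + δ τ)})
    (fun τ => isOpen_Ioo.preimage continuous_subtype_val) fun x _ => Set.mem_iUnion.2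
      ⟨x, sub_lt_self _ (hδ x), lt_add_of_pos_right _ (hδ x)⟩
  have hstep (m) : P (t m) (t (m + 1)) := by
    obtain ⟨τ, hτ⟩ := ht m
    exact mono (hτ (Set.left_mem_Icc.2 (ht_mono m.le_succ))).1.le
      (hτ (Set.right_mem_Icc.2 (ht_mono m.le_succ))).2.le (hP τ)
  have hall (m) : P (t 0) (t (m + 1)) := by
    induction m with
    | zero => exact hstep 0
    | succ m ih => exact glue ih (hstep (m + 1))
  simpa [ht₀, htn (n + 1) n.le_succ] using hall n

section LevelInduction

variable {K : Type*} [TopologicalSpace K] [CompactSpace K] [T2Space K]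
  {𝒜 : Subalgebra ℂ C(K, ℂ)} {ι : Type*} [Fintype ι] [DecidableEq ι] {s : Set ι}

theorem HasCylinderCompletion.of_forall_level (h𝒜 : IsNatural 𝒜) {M : Submonoid 𝒜} (a : 𝒜)
    (H : ∀ M', M ≤ M' → (∃ τ : ℝ, ∀ z ∈ sublevel M', ((a : C(K, ℂ)) z).re = τ) →
      HasCylinderCompletion 𝒜 s (sublevel M')) :
    HasCylinderCompletion 𝒜 s (sublevel M) := by
  intro Y _ _ _ Z hZ G₀ hcol hdet
  let f : K → ℝ := fun z => ((a : C(K, ℂ)) z).re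
  have hf : Continuous f := by fun_prop
  have h_bound (z : K) : f z ∈ Set.Icc (-‖(a : C(K, ℂ))‖) ‖(a : C(K, ℂ))‖ :=
    abs_le.1 ((Complex.abs_re_le_norm _).trans (ContinuousMap.norm_coe_le_norm _ z))
  refine (forall_Icc_of_forall_exists
    (P := fun α β => CompletesOver s (topAndWall Z) G₀ (sublevel M ∩ f ⁻¹' Set.Icc α β))
    (fun hα hβ h => h.mono (Set.inter_subset_inter_right _ (Set.preimage_mono
      (Set.Icc_subset_Icc hα hβ)))) (fun τ => ?_)
    (CompletesOver.glue_Icc h𝒜 (isClosed_bottom Y) fun M' hM' hτ =>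
      (H M' hM' hτ).hasPathsToOne hZ) (neg_le_self (norm_nonneg _))).mono
    fun z hz => ⟨hz, h_bound z⟩
  obtain ⟨M₁, -, M', ⟨hM₁, -⟩, ⟨hM₁', -⟩, -, -, -, hM'⟩ := exists_sublevel_eq h𝒜.isClosed M a τ
  refine CompletesOver.exists_preimage_Icc (isClosed_sublevel M) hf ?_
  exact (H M' (hM₁.trans hM₁') ⟨τ, fun z hz => ((hM' z).1 hz).2⟩ Y Z hZ G₀
    (fun p hp => hcol p ((hM' _).1 hp).1) fun p hpJ hp => hdet p hpJ ((hM' _).1 hp).1).mono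
    fun z hz => (hM' z).2 hz

theorem HasCylinderCompletion.of_forall_levels (h𝒜 : IsNatural 𝒜) (t : Finset 𝒜)
    {M : Submonoid 𝒜}
    (H : ∀ M', M ≤ M' → (∀ a ∈ t, ∃ τ : ℝ, ∀ z ∈ sublevel M', ((a : C(K, ℂ)) z).re = τ) →
      HasCylinderCompletion 𝒜 s (sublevel M')) :
    HasCylinderCompletion 𝒜 s (sublevel M) := by
  classical
  induction t using Finset.induction_on generalizing M with
  | empty => exact H M le_rfl (by simp)
  | insert a t _ ih =>
    refine .of_forall_level h𝒜 a fun M₁ hM₁ ⟨τ, hτ⟩ => ih fun M₂ hM₂ ht => ?_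
    exact H M₂ (hM₁.trans hM₂) (Finset.forall_mem_insert _ _ _ |>.2
      ⟨⟨τ, fun z hz => hτ z fun m hm => hz m (hM₂ hm)⟩, ht⟩)

end LevelInduction

/-! ### Topological completion over a contractible space -/

section Transport

variable {R 𝔅 𝔅' ι κ : Type*} [TopologicalSpace R] [NormedCommRing 𝔅] [CompleteSpace 𝔅]
  [CommRing 𝔅'] [Fintype ι] [DecidableEq ι] [Finite κ] [DecidableEq κ]

lemma isOpen_setOf_isUnit_matrix : IsOpen {V : Matrix ι ι 𝔅 | IsUnit V} := by
  simp only [Matrix.isUnit_iff_isUnit_det]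
  exact Units.isOpen.preimage continuous_id.matrix_det

theorem exists_units_mul_eq [PreconnectedSpace R] (π : 𝔅 →+* 𝔅') {X : R → Matrix ι κ 𝔅}
    (hX : Continuous X) (hL : ∀ r, ∃ L : Matrix κ ι 𝔅, L * X r = 1)
    (hπ : ∀ r r', (X r).map π = (X r').map π) (r r' : R) :
    ∃ V : GL ι 𝔅, (V : Matrix ι ι 𝔅) * X r = X r' ∧ V.map π = 1 := by
  cases nonempty_fintype κ
  let P : R → R → Prop := fun r r' =>
    ∃ V : GL ι 𝔅, (V : Matrix ι ι 𝔅) * X r = X r' ∧ V.map π = 1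
  have : Std.Symm P := ⟨fun r r' ⟨V, hV, hVπ⟩ =>
    ⟨V⁻¹, by rw [← hV, ← Matrix.mul_assoc, Units.inv_mul, Matrix.one_mul],
      by rw [map_inv, hVπ, inv_one]⟩⟩
  have htrans : IsTrans R P := ⟨fun r r' r'' ⟨V, hV, hVπ⟩ ⟨V', hV', hVπ'⟩ =>
    ⟨V' * V, by rw [Units.val_mul, Matrix.mul_assoc, hV, hV'], by rw [map_mul, hVπ, hVπ', one_mul]⟩⟩
  refine PreconnectedSpace.induction₂ P (fun r => ?_) htrans r r'
  obtain ⟨L, hL⟩ := hL r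
  have hcont : Continuous fun r' => 1 + (X r' - X r) * L := by fun_prop
  have hunit : ∀ᶠ r' in 𝓝 r, IsUnit (1 + (X r' - X r) * L) :=
    hcont.continuousAt.eventually (isOpen_setOf_isUnit_matrix.eventually_mem (by simp))
  filter_upwards [hunit] with r' hr'
  refine ⟨hr'.unit, ?_, Units.ext ?_⟩
  · rw [hr'.unit_spec, Matrix.add_mul, Matrix.one_mul, Matrix.mul_assoc, hL, Matrix.mul_one,
      add_sub_cancel]
  · change (1 + (X r' - X r) * L).map π = 1
    rw [Matrix.map_add _ (map_add π), Matrix.map_mul, Matrix.map_sub _ (map_sub π), hπ r' r,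
      sub_self, Matrix.zero_mul, add_zero, Matrix.map_one _ (map_zero π) (map_one π)]

end Transport

section LeftInverse

lemma isUnit_iff_forall_det_map_ne_zero {S ι : Type*} [TopologicalSpace S] [Fintype ι]
    [DecidableEq ι] {F : Matrix ι ι C(S, ℂ)} : IsUnit F ↔ ∀ p, (F.map (· p)).det ≠ 0 := by
  rw [Matrix.isUnit_iff_isUnit_det, ContinuousMap.isUnit_iff_forall_ne_zero]
  exact forall_congr' fun p => not_congr
    (Eq.congr_left ((ContinuousMap.evalAlgHom ℂ ℂ p).map_det F))

variable {S ι κ : Type*} [TopologicalSpace S] [Fintype ι] [Finite κ] [DecidableEq κ]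

open scoped ComplexOrder in
lemma exists_leftInverse_of_linearIndependent_col {F : Matrix ι κ C(S, ℂ)}
    (hF : ∀ p, LinearIndependent ℂ (F.map (· p)).col) : ∃ L : Matrix κ ι C(S, ℂ), L * F = 1 := by
  cases nonempty_fintype κ
  have hunit : IsUnit (F.conjTranspose * F) := isUnit_iff_forall_det_map_ne_zero.2 fun p => by
    have h_eval : (F.conjTranspose * F).map (· p) =
        (F.map (· p)).conjTranspose * F.map (· p) :=
      Matrix.map_mul (f := ContinuousMap.evalAlgHom ℂ ℂ p)
    rw [h_eval]
    exact (Matrix.PosDef.conjTranspose_mul_self _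
      (Matrix.mulVec_injective_iff.2 (hF p))).det_pos.ne'
  exact ⟨(F.conjTranspose * F)⁻¹ * F.conjTranspose, by
    rw [Matrix.mul_assoc, Matrix.nonsing_inv_mul _ (Matrix.isUnit_iff_isUnit_det _ |>.1 hunit)]⟩

end LeftInverse

lemma exists_linearEquiv_apply_eq {𝕜 V κ : Type*} [Field 𝕜] [AddCommGroup V] [Module 𝕜 V]
    [Finite κ] {v w : κ → V} (hv : LinearIndependent 𝕜 v) (hw : LinearIndependent 𝕜 w) :
    ∃ g : V ≃ₗ[𝕜] V, ∀ j, g (v j) = w j := by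
  have : FiniteDimensional 𝕜 (Submodule.span 𝕜 (Set.range v)) :=
    .span_of_finite 𝕜 (Set.finite_range v)
  let bv := Module.Basis.span hv
  let bw := Module.Basis.span hw
  obtain ⟨g, hg⟩ := Submodule.exists_linearEquiv_restrict_eq (bv.equiv bw (.refl κ))
  refine ⟨g, fun j => ?_⟩
  have := hg (bv j)
  rw [Module.Basis.equiv_apply] at this
  simpa [bv, bw, Module.Basis.span_apply] using this.symm

lemma exists_isUnit_submatrix_eq {𝕜 ι κ : Type*} [Field 𝕜] [Fintype ι] [DecidableEq ι] [Finite κ]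
    [DecidableEq κ] {X : Matrix ι κ 𝕜} {B : Matrix κ ι 𝕜} (hX : B * X = 1) (e : κ ↪ ι) :
    ∃ G : Matrix ι ι 𝕜, IsUnit G ∧ G.submatrix id e = X := by
  cases nonempty_fintype κ
  have hcol : LinearIndependent 𝕜 X.col := Matrix.mulVec_injective_iff.1 <|
    Function.LeftInverse.injective (g := B.mulVec) fun v => by
      rw [Matrix.mulVec_mulVec, hX, Matrix.one_mulVec]
  have hsingle : LinearIndependent 𝕜 fun j => (Pi.basisFun 𝕜 ι) (e j) :=
    (Pi.basisFun 𝕜 ι).linearIndependent.comp e e.injective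
  obtain ⟨g, hg⟩ := exists_linearEquiv_apply_eq hsingle hcol
  refine ⟨LinearMap.toMatrix' (g : (ι → 𝕜) →ₗ[𝕜] ι → 𝕜), ?_, ?_⟩
  · exact LinearMap.isUnit_toMatrix'_iff.2 ((Module.End.isUnit_iff _).2 g.bijective)
  · ext i j
    have := congrFun (hg j) i
    simpa [LinearMap.toMatrix'_apply] using this

section TopologicalCompletion

variable {S ι κ : Type*} [TopologicalSpace S] [CompactSpace S] [Fintype ι] [DecidableEq ι]
  [Finite κ] [DecidableEq κ]

theorem exists_mul_comp_eq_of_homotopicRel {T : Type*} [TopologicalSpace T] {f₀ f₁ : C(S, T)}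
    {A : Set S} (hf : f₀.HomotopicRel f₁ A) {F : Matrix ι κ C(T, ℂ)} {B : Matrix κ ι C(T, ℂ)}
    (hBF : B * F = 1) : ∃ V : GL ι C(S, ℂ),
      (V : Matrix ι ι C(S, ℂ)) * F.map (·.comp f₁) = F.map (·.comp f₀) ∧
      ∀ q ∈ A, (V : Matrix ι ι C(S, ℂ)).map (· q) = 1 := by
  obtain ⟨H⟩ := hf
  let ρ (r : unitInterval) : C(T, ℂ) →ₐ[ℂ] C(S, ℂ) :=
    ContinuousMap.compRightAlgHom ℂ ℂ (H.curry r)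
  have hρ : Continuous fun r => F.map (ρ r) := continuous_matrix fun i j =>
    (F i j).continuous_postcomp.comp H.curry.continuous
  have hL (r) : ∃ L : Matrix κ ι C(S, ℂ), L * F.map (ρ r) = 1 :=
    ⟨B.map (ρ r), by rw [← Matrix.map_mul, hBF, Matrix.map_one _ (map_zero _) (map_one _)]⟩
  let π : C(S, ℂ) →+* C(A, ℂ) :=
    (ContinuousMap.compRightAlgHom ℂ ℂ ⟨Subtype.val, continuous_subtype_val⟩).toRingHom
  have hπ (r r') : (F.map (ρ r)).map π = (F.map (ρ r')).map π := by
    ext i j q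
    exact congrArg (F i j) ((H.eq_fst r q.2).trans (H.eq_fst r' q.2).symm)
  obtain ⟨V, hV, hVπ⟩ := exists_units_mul_eq π hρ hL hπ 1 0
  have hH₀ : H.curry 0 = f₀ := ContinuousMap.ext H.apply_zero
  have hH₁ : H.curry 1 = f₁ := ContinuousMap.ext H.apply_one
  simp only [ρ, hH₀, hH₁] at hV
  refine ⟨V, hV, fun q hq => ?_⟩
  exact (congrArg (Matrix.map · (ContinuousMap.evalAlgHom ℂ ℂ (⟨q, hq⟩ : A)))
    (congrArg Units.val hVπ)).trans (Matrix.map_one _ (map_zero _) (map_one _))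

theorem exists_isUnit_submatrix_eq_of_contractibleSpace [ContractibleSpace S]
    {F : Matrix ι κ C(S, ℂ)} {B : Matrix κ ι C(S, ℂ)} (hBF : B * F = 1) (e : κ ↪ ι) :
    ∃ Φ : Matrix ι ι C(S, ℂ), IsUnit Φ ∧ Φ.submatrix id e = F := by
  obtain ⟨s₀, h⟩ := id_nullhomotopic S
  obtain ⟨V, hV, -⟩ := exists_mul_comp_eq_of_homotopicRel
    (ContinuousMap.homotopicRel_empty.2 h) hBF
  let ε := ContinuousMap.evalAlgHom ℂ ℂ s₀ (X := S)
  have hBF₀ : B.map ε * F.map ε = 1 := by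
    rw [← Matrix.map_mul, hBF, Matrix.map_one _ (map_zero _) (map_one _)]
  obtain ⟨G, hG, hGF⟩ := exists_isUnit_submatrix_eq hBF₀ e
  refine ⟨V * (algebraMap ℂ C(S, ℂ)).mapMatrix G, V.isUnit.mul (hG.map _), ?_⟩
  calc ((V : Matrix ι ι C(S, ℂ)) * (algebraMap ℂ C(S, ℂ)).mapMatrix G).submatrix id e
      = (V : Matrix ι ι C(S, ℂ)) * (G.submatrix id e).map (algebraMap ℂ C(S, ℂ)) :=
        Matrix.submatrix_mul _ _ id id e Function.bijective_id
    _ = F := by rw [hGF]; exact hV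

lemma exists_homotopicRel_topAndWall {Y : Type*} [TopologicalSpace Y] [NormalSpace Y]
    {Z : Set Y} (hZ : IsClosed Z) {U : Set (Y × unitInterval)} (hU : IsOpen U)
    (hZU : topAndWall Z ⊆ U) : ∃ f : C(Y × unitInterval, Y × unitInterval),
      (∀ q, f q ∈ U) ∧ (ContinuousMap.id _).HomotopicRel f (topAndWall Z) := by
  have hW : IsClosed (Prod.fst '' Uᶜ) := isClosedMap_fst_of_compactSpace _ hU.isClosed_compl
  have hdisj : Disjoint Z (Prod.fst '' Uᶜ) := Set.disjoint_left.2 fun y hy ⟨q, hqU, hqy⟩ =>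
    hqU (hZU (Or.inl (hqy ▸ hy)))
  obtain ⟨l, hl₀, hl₁, hl⟩ := exists_continuous_zero_one_of_isClosed hZ hW hdisj
  let lI : C(Y, unitInterval) := ⟨fun y => ⟨l y, hl y⟩, by fun_prop⟩
  have hl₀ {y} (hy : y ∈ Z) : lI y = 0 := Subtype.ext (hl₀ hy)
  let H : C(unitInterval × (Y × unitInterval), Y × unitInterval) :=
    ⟨fun x => (x.2.1, max x.2.2 (x.1 * lI x.2.1)), by fun_prop⟩
  refine ⟨H.curry 1, fun q => ?_, ⟨⟨⟨H, fun q => ?_, fun _ => rfl⟩, fun r q hq => ?_⟩⟩⟩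
  · by_cases hq : q.1 ∈ Prod.fst '' Uᶜ
    · have hlq : lI q.1 = 1 := Subtype.ext (hl₁ hq)
      exact hZU (Or.inr (by simp [H, hlq, unitInterval.le_one']))
    · exact not_not.1 fun hqU => hq ⟨_, hqU, rfl⟩
  · exact Prod.ext rfl (by simp [H])
  · rcases hq with hq | hq
    · exact Prod.ext rfl (by simp [H, hl₀ hq])
    · exact Prod.ext rfl (by simp [H, hq, unitInterval.le_one'])

theorem exists_isUnit_eqOn_topAndWall {Y : Type*} [TopologicalSpace Y] [CompactSpace Y]
    [T2Space Y] {s : Set ι} {Z : Set Y} (hZ : IsClosed Z)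
    {g : Matrix ι ι C(Y × unitInterval, ℂ)}
    (hcol : ∀ q, LinearIndepOn ℂ (g.map (· q)).col s)
    (hdet : ∀ q ∈ topAndWall Z, (g.map (· q)).det ≠ 0) :
    ∃ k : Matrix ι ι C(Y × unitInterval, ℂ), IsUnit k ∧
      ∀ q i j, j ∈ s ∨ q ∈ topAndWall Z → k i j q = g i j q := by
  classical
  have hU : IsOpen {q | (g.map (· q)).det ≠ 0} :=
    isOpen_ne_fun (Continuous.matrix_det (continuous_matrix fun i j => (g i j).continuous))
      continuous_const
  obtain ⟨f, hfU, hf⟩ := exists_homotopicRel_topAndWall hZ hU hdet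
  obtain ⟨L, hL⟩ := exists_leftInverse_of_linearIndependent_col
    (F := g.submatrix id (Subtype.val : s → ι)) hcol
  obtain ⟨V, hV, hVZ⟩ := exists_mul_comp_eq_of_homotopicRel hf hL
  refine ⟨V * g.map (·.comp f), V.isUnit.mul (isUnit_iff_forall_det_map_ne_zero.2 hfU),
    fun q i j hj => ?_⟩
  rcases hj with hj | hq
  · exact DFunLike.congr_fun (congrFun (congrFun hV i) ⟨j, hj⟩) q
  · obtain ⟨H⟩ := hf
    have hfq : f q = q := (H.apply_one q).symm.trans (H.eq_fst 1 hq)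
    have h_eval : ((V : Matrix ι ι C(Y × unitInterval, ℂ)) * g.map (·.comp f)).map (· q) =
        (V : Matrix ι ι C(Y × unitInterval, ℂ)).map (· q) * g.map (· (f q)) :=
      Matrix.map_mul (f := ContinuousMap.evalAlgHom ℂ ℂ q)
    rw [hVZ q hq, Matrix.one_mul, hfq] at h_eval
    exact congrFun (congrFun h_eval i) j

theorem HasCylinderCompletion.of_subsingleton {K : Type*} [TopologicalSpace K]
    {𝒜 : Subalgebra ℂ C(K, ℂ)} {s : Set ι} {X : Set K} (hX : X.Subsingleton) :
    HasCylinderCompletion 𝒜 s X := by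
  intro Y _ _ _ Z hZ G₀ hcol hdet
  obtain rfl | ⟨z₀, hz₀⟩ := X.eq_empty_or_nonempty
  · exact ⟨G₀, sub_mem_columnIdeal_iff.2 fun _ _ _ _ => rfl, fun _ hp => hp.elim⟩
  let g : Matrix ι ι C(Y × unitInterval, ℂ) := G₀.map fun f =>
    (f : C((Y × unitInterval) × K, ℂ)).comp ((ContinuousMap.id _).prodMk (.const _ z₀))
  obtain ⟨k, hk, hkg⟩ := exists_isUnit_eqOn_topAndWall (g := g) hZ
    (fun q => hcol (q, z₀) hz₀) (fun q hq => hdet (q, z₀) hq hz₀)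
  let G := G₀ + (k - g).map (ofBase 𝒜 (bottom Y))
  have hG (p) (i j) : evalMatrix p G i j = evalMatrix p G₀ i j + (k i j p.1 - g i j p.1) := rfl
  refine ⟨G, sub_mem_columnIdeal_iff.2 fun p i j hp => ?_, fun p hp => ?_⟩
  · rw [hG, hkg _ _ _ hp, sub_self, add_zero]
  · obtain ⟨q, z⟩ := p
    obtain rfl : z = z₀ := hX hp hz₀
    have hGk : evalMatrix (q, z) G = k.map (· q) := by
      ext i j
      exact (hG _ i j).trans (add_sub_cancel _ _)
    exact hGk ▸ isUnit_iff_forall_det_map_ne_zero.1 hk q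

end TopologicalCompletion

section NaturalCompletion

variable {K : Type*} [TopologicalSpace K] {𝒜 : Subalgebra ℂ C(K, ℂ)} {ι : Type*} [Fintype ι]
  [DecidableEq ι] {s : Set ι}

open Classical in
-- Scaling the free columns by the height joins `Φ` at the top to a matrix over `𝒜` at the bottom.
lemma exists_evalMatrix_eq_ite_mul (Y : Type*) [TopologicalSpace Y] {Φ : Matrix ι ι C(K, ℂ)}
    (hΦ : ∀ i, ∀ j ∈ s, Φ i j ∈ 𝒜) : ∃ G : Matrix ι ι (sliceAlgebra 𝒜 (bottom Y)),
      ∀ p i j, evalMatrix p G i j = (if j ∈ s then 1 else ((p.1.2 : ℝ) : ℂ)) * Φ i j p.2 := by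
  let g (i j : ι) : C((Y × unitInterval) × K, ℂ) :=
    ⟨fun p => (if j ∈ s then 1 else ((p.1.2 : ℝ) : ℂ)) * Φ i j p.2, by split_ifs <;> fun_prop⟩
  have hg (i j) : g i j ∈ sliceAlgebra 𝒜 (bottom Y) := fun q (hq : q.2 = 0) => by
    by_cases hj : j ∈ s
    · convert hΦ i j hj
      ext z
      simp [g, hj, sliceMap]
    · convert 𝒜.zero_mem
      ext z
      simp [g, hj, hq, sliceMap]
  exact ⟨.of fun i j => ⟨g i j, hg i j⟩, fun _ _ _ => rfl⟩

lemma IsNatural.hasCylinderCompletion [CompactSpace K] [T2Space K] (h𝒜 : IsNatural 𝒜) (t : Finset 𝒜)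
    (ht : ∀ z z', (∀ f ∈ t, (f : C(K, ℂ)) z = (f : C(K, ℂ)) z') → z = z') :
    HasCylinderCompletion 𝒜 s Set.univ := by
  classical
  have huniv : sublevel (⊥ : Submonoid 𝒜) = Set.univ := Set.eq_univ_of_forall fun z m hm => by
    simp [Submonoid.mem_bot.1 hm]
  rw [← huniv]
  refine .of_forall_levels h𝒜 (t ∪ t.image fun f => (-Complex.I) • f) fun M _ hM =>
    .of_subsingleton fun z hz z' hz' => ht z z' fun f hf => Complex.ext ?_ ?_
  · obtain ⟨τ, hτ⟩ := hM f (Finset.mem_union_left _ hf)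
    rw [hτ z hz, hτ z' hz']
  · obtain ⟨τ, hτ⟩ := hM _ (Finset.mem_union_right _ (Finset.mem_image_of_mem _ hf))
    simpa using (hτ z hz).trans (hτ z' hz').symm

lemma HasCylinderCompletion.exists_isUnit_map_val (h : HasCylinderCompletion 𝒜 s Set.univ)
    {Φ : Matrix ι ι C(K, ℂ)} (hΦ : IsUnit Φ) (hΦs : ∀ i, ∀ j ∈ s, Φ i j ∈ 𝒜) :
    ∃ G : Matrix ι ι 𝒜, IsUnit (G.map 𝒜.val) ∧ ∀ i, ∀ j ∈ s, (G i j : C(K, ℂ)) = Φ i j := by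
  have hdet := isUnit_iff_forall_det_map_ne_zero.1 hΦ
  obtain ⟨G₀, hG₀⟩ := exists_evalMatrix_eq_ite_mul (𝒜 := 𝒜) Unit hΦs
  have hG₀s (p i j) (hj : j ∈ s) : evalMatrix p G₀ i j = Φ i j p.2 := by simp [hG₀, hj]
  have hcol (p) : LinearIndepOn ℂ (evalMatrix p G₀).col s := by
    have hli := Matrix.linearIndependent_cols_iff_isUnit.2
      ((Matrix.isUnit_iff_isUnit_det _).2 (hdet p.2).isUnit)
    exact (hli.linearIndepOn s).congr fun j hj => funext fun i => (hG₀s p i j hj).symm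
  have htop (p) (hp : p.1 ∈ topAndWall (∅ : Set Unit)) : (evalMatrix p G₀).det ≠ 0 := by
    have hp₁ : p.1.2 = 1 := hp.resolve_left id
    convert hdet p.2 using 2
    ext i j
    simp [hG₀, hp₁]
  obtain ⟨G, hG, hGdet⟩ := h Unit ∅ isClosed_empty G₀ (fun p _ => hcol p) fun p hp _ => htop p hp
  refine ⟨.of fun i j => ⟨_, (G i j).2 ((), 0) rfl⟩,
    isUnit_iff_forall_det_map_ne_zero.2 fun z => hGdet (((), 0), z) trivial, fun i j hj => ?_⟩
  ext z
  exact (sub_mem_columnIdeal_iff.1 hG (((), 0), z) i j (.inl hj)).trans (hG₀s _ i j hj)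

end NaturalCompletion

/-! ### Polynomial hulls and joint spectra -/

section PolynomialHull

variable {σ : Type*}

/-- The polynomially convex hull of a set `K`: the points at which every polynomial satisfies all
the upper bounds that it satisfies on `K`. -/
def polynomialHull (K : Set (σ → ℂ)) : Set (σ → ℂ) :=
  {z | ∀ (p : MvPolynomial σ ℂ) (C : ℝ),
    (∀ w ∈ K, ‖MvPolynomial.eval w p‖ ≤ C) → ‖MvPolynomial.eval z p‖ ≤ C}

/-- The closed polydisc with polyradius `r`, centred at the origin. -/
def polydisc (r : σ → ℝ) : Set (σ → ℂ) := Set.univ.pi fun i => Metric.closedBall 0 (r i)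

lemma isCompact_polydisc (r : σ → ℝ) : IsCompact (polydisc r) :=
  isCompact_univ_pi fun i => isCompact_closedBall 0 (r i)

instance (r : σ → ℝ) : CompactSpace (polydisc r) :=
  isCompact_iff_compactSpace.1 (isCompact_polydisc r)

lemma exists_continuousMap_eq_extend {S : Set σ} {r : σ → ℝ} (hr : ∀ i, 0 ≤ r i)
    {X : Set (S → ℂ)} (hX : X ⊆ polydisc fun i => r i) :
    ∃ ε : C(X, polydisc r), ∀ z : X,
      (ε z : σ → ℂ) = Function.extend Subtype.val z.1 (0 : σ → ℂ) := by
  have hmem {i : σ} (hi : i ∈ S) (z : S → ℂ) :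
      Function.extend Subtype.val z (0 : σ → ℂ) i = z ⟨i, hi⟩ :=
    Subtype.val_injective.extend_apply z (0 : σ → ℂ) ⟨i, hi⟩
  have hnotMem {i : σ} (hi : i ∉ S) (z : S → ℂ) :
      Function.extend Subtype.val z (0 : σ → ℂ) i = 0 :=
    Function.extend_apply' z (0 : σ → ℂ) i fun ⟨j, hj⟩ => hi (hj ▸ j.2)
  refine ⟨⟨fun z => ⟨Function.extend Subtype.val z.1 (0 : σ → ℂ), fun i _ => ?_⟩,
    .subtype_mk (continuous_pi fun i => ?_) _⟩, fun z => rfl⟩ <;> by_cases hi : i ∈ S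
  · rw [hmem hi]
    exact hX z.2 ⟨i, hi⟩ trivial
  · rw [hnotMem hi]
    exact Metric.mem_closedBall_self (hr i)
  · simp only [hmem hi]
    exact (continuous_apply _).comp continuous_subtype_val
  · simp only [hnotMem hi]
    exact continuous_const

variable {K : Set (σ → ℂ)}

lemma subset_polynomialHull : K ⊆ polynomialHull K := fun z hz _ _ h => h z hz

lemma polynomialHull_polynomialHull_subset :
    polynomialHull (polynomialHull K) ⊆ polynomialHull K := fun _ hz p C hC =>
  hz p C fun _ hw => hw p C hC

lemma polynomialHull_subset_polydisc {r : σ → ℝ} (hK : K ⊆ polydisc r) :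
    polynomialHull K ⊆ polydisc r := fun z hz i hi => by
  have := hz (MvPolynomial.X i) (r i) fun w hw => by simpa using hK hw i hi
  simpa using this

lemma isClosed_polynomialHull : IsClosed (polynomialHull K) := by
  simp only [polynomialHull, Set.ofPred_forall]
  exact isClosed_iInter fun p => isClosed_iInter fun C => isClosed_iInter fun _ =>
    isClosed_le (MvPolynomial.continuous_eval p).norm continuous_const

lemma isCompact_polynomialHull (hK : IsCompact K) : IsCompact (polynomialHull K) := by
  choose r hr using fun i : σ =>
    hK.exists_bound_of_continuousOn (f := fun z => z i) (by fun_prop)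
  exact (isCompact_polydisc r).of_isClosed_subset isClosed_polynomialHull
    (polynomialHull_subset_polydisc fun z hz i _ => by simpa using hr i z hz)

lemma exists_finset_restrict_notMem_polynomialHull {C : Set (σ → ℂ)} (hC : IsCompact C)
    (hCK : Disjoint C (polynomialHull K)) (S₀ : Finset σ) :
    ∃ S, S₀ ⊆ S ∧ ∀ z ∈ C, S.restrict z ∉ polynomialHull (S.restrict '' K) := by
  classical
  let U (q : MvPolynomial σ ℂ × ℝ) : Set (σ → ℂ) := {z | q.2 < ‖MvPolynomial.eval z q.1‖}
  have hU (q) : IsOpen (U q) :=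
    isOpen_lt continuous_const (MvPolynomial.continuous_eval q.1).norm
  let Q : Set (MvPolynomial σ ℂ × ℝ) := {q | ∀ w ∈ K, ‖MvPolynomial.eval w q.1‖ ≤ q.2}
  have hCU : C ⊆ ⋃ q ∈ Q, U q := fun z hz => by
    have := Set.disjoint_left.1 hCK hz
    simp only [polynomialHull, Set.mem_ofPred_eq, not_forall, not_le] at this
    obtain ⟨p, c, hpc, hz⟩ := this
    exact Set.mem_biUnion (x := (p, c)) hpc hz
  obtain ⟨t, htQ, htfin, htC⟩ := hC.elim_finite_subcover_image (fun q _ => hU q) hCU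
  refine ⟨S₀ ∪ htfin.toFinset.biUnion fun q => q.1.vars, Finset.subset_union_left, ?_⟩
  set S := S₀ ∪ htfin.toFinset.biUnion fun q => q.1.vars
  intro z hz hzS
  obtain ⟨⟨p, c⟩, hq, hzq⟩ := Set.mem_iUnion₂.1 (htC hz)
  have hpS : ↑p.vars ⊆ Set.range (Subtype.val : S → σ) := by
    rw [Subtype.range_coe, Finset.coe_subset]
    exact (Finset.subset_biUnion_of_mem (fun q : MvPolynomial σ ℂ × ℝ => q.1.vars)
      (htfin.mem_toFinset.2 hq)).trans Finset.subset_union_right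
  obtain ⟨p, rfl⟩ := MvPolynomial.exists_rename_eq_of_vars_subset_range p (Subtype.val : S → σ)
    Subtype.val_injective hpS
  have heval (w : σ → ℂ) : MvPolynomial.eval w (MvPolynomial.rename Subtype.val p) =
    MvPolynomial.eval (S.restrict w) p := MvPolynomial.eval_rename _ _ _
  refine hzq.not_ge ((heval z).symm ▸ hzS p c ?_)
  rintro _ ⟨w, hw, rfl⟩
  exact heval w ▸ htQ hq w hw

end PolynomialHull

section PolynomialAlgebra

variable {σ : Type*}

/-- The restriction of polynomials to a set, as continuous functions. -/
noncomputable def polynomialRestrict (X : Set (σ → ℂ)) : MvPolynomial σ ℂ →ₐ[ℂ] C(X, ℂ) :=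
  MvPolynomial.aeval fun i => ⟨fun z => z.1 i, (continuous_apply i).comp continuous_subtype_val⟩

@[simp]
lemma polynomialRestrict_apply {X : Set (σ → ℂ)} (p : MvPolynomial σ ℂ) (z : X) :
    polynomialRestrict X p z = MvPolynomial.eval z.1 p := by
  have : (ContinuousMap.evalAlgHom ℂ ℂ z).comp (polynomialRestrict X) = MvPolynomial.aeval z.1 := by
    ext i
    simp [polynomialRestrict]
  exact DFunLike.congr_fun this p

/-- The algebra `P(X)` of continuous functions that are uniform limits of polynomials. -/
noncomputable def polynomialAlgebra (X : Set (σ → ℂ)) [CompactSpace X] : Subalgebra ℂ C(X, ℂ) :=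
  (polynomialRestrict X).range.topologicalClosure

lemma polynomialRestrict_mem (X : Set (σ → ℂ)) [CompactSpace X] (p : MvPolynomial σ ℂ) :
    polynomialRestrict X p ∈ polynomialAlgebra X :=
  (polynomialRestrict X).range.le_topologicalClosure ⟨p, rfl⟩

variable {X : Set (σ → ℂ)} [CompactSpace X]

lemma isClosed_polynomialAlgebra : IsClosed (polynomialAlgebra X : Set C(X, ℂ)) :=
  (polynomialRestrict X).range.isClosed_topologicalClosure

lemma exists_eval_of_algHom_polynomialAlgebra (hX : polynomialHull X ⊆ X)
    (χ : polynomialAlgebra X →ₐ[ℂ] ℂ) : ∃ z, ∀ f : polynomialAlgebra X, χ f = (f : C(X, ℂ)) z := by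
  have : CompleteSpace (polynomialAlgebra X) := isClosed_polynomialAlgebra.completeSpace_coe
  have : Nontrivial (polynomialAlgebra X) := χ.toRingHom.domain_nontrivial
  obtain ⟨w⟩ : Nonempty X := by
    by_contra! h
    exact not_subsingleton (polynomialAlgebra X)
      ⟨fun f g => Subtype.ext (ContinuousMap.ext h.elim)⟩
  let r : MvPolynomial σ ℂ →ₐ[ℂ] polynomialAlgebra X :=
    (polynomialRestrict X).codRestrict _ (polynomialRestrict_mem X)
  let z (i : σ) : ℂ := χ (r (MvPolynomial.X i))
  have hz (p) : χ (r p) = MvPolynomial.eval z p :=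
    DFunLike.congr_fun (MvPolynomial.aeval_unique (χ.comp r)) p
  have hzX : z ∈ X := hX fun p C hC => by
    have hC₀ : 0 ≤ C := (norm_nonneg _).trans (hC w w.2)
    rw [← hz]
    refine (AlgHom.norm_apply_le_self_mul_norm_one χ _).trans
      ((mul_le_of_le_one_right (norm_nonneg _) (norm_one_subalgebra_le _)).trans ?_)
    exact (ContinuousMap.norm_le _ hC₀).2 fun w =>
      (polynomialRestrict_apply p w).symm ▸ hC w w.2
  have hr : DenseRange r := fun f => by
    rw [closure_subtype, ← Set.range_comp]
    exact f.2
  let z' : X := ⟨z, hzX⟩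
  refine ⟨z', fun f => ?_⟩
  refine congrFun (hr.equalizer (map_continuous χ)
    (map_continuous (evalChar (polynomialAlgebra X) z')) ?_) f
  exact funext fun p => (hz p).trans (polynomialRestrict_apply p z').symm

lemma isNatural_polynomialAlgebra (hX : polynomialHull X ⊆ X) :
    IsNatural (polynomialAlgebra X) :=
  ⟨isClosed_polynomialAlgebra, exists_eval_of_algHom_polynomialAlgebra hX⟩

theorem exists_isUnit_map_polynomialRestrict [Finite σ] (hX : polynomialHull X ⊆ X)
    {ι : Type*} [Fintype ι] [DecidableEq ι] {s : Set ι} {Φ : Matrix ι ι C(X, ℂ)} (hΦ : IsUnit Φ)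
    {P : Matrix ι ι (MvPolynomial σ ℂ)}
    (hP : ∀ i, ∀ j ∈ s, polynomialRestrict X (P i j) = Φ i j) :
    ∃ Q : Matrix ι ι (MvPolynomial σ ℂ),
      IsUnit (Q.map (polynomialRestrict X)) ∧ ∀ i, ∀ j ∈ s, Q i j = P i j := by
  classical
  have := Fintype.ofFinite σ
  have hcyl : HasCylinderCompletion (polynomialAlgebra X) s Set.univ :=
    (isNatural_polynomialAlgebra hX).hasCylinderCompletion
      (Finset.univ.image fun i => ⟨_, polynomialRestrict_mem X (MvPolynomial.X i)⟩)
      fun z z' h => Subtype.ext (funext fun i => by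
        simpa using h _ (Finset.mem_image_of_mem _ (Finset.mem_univ i)))
  obtain ⟨G, hG, hGs⟩ := hcyl.exists_isUnit_map_val hΦ fun i j hj =>
    hP i j hj ▸ polynomialRestrict_mem X (P i j)
  let V (i j : ι) : Set C(X, ℂ) := polynomialRestrict X '' {p | j ∈ s → p = P i j}
  have hGV : G.map (polynomialAlgebra X).val ∈
      closure (Set.univ.pi fun i => Set.univ.pi (V i)) := by
    simp only [closure_pi_set]
    intro i _ j _
    by_cases hj : j ∈ s
    · exact subset_closure ⟨P i j, fun _ => rfl, (hP i j hj).trans (hGs i j hj).symm⟩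
    · have : V i j = (polynomialRestrict X).range := by simp [V, hj]
      change G.map _ i j ∈ closure (V i j)
      rw [this]
      exact (G i j).2
  obtain ⟨F, hF, hFV⟩ := mem_closure_iff.1 hGV _ isOpen_setOf_isUnit_matrix hG
  choose Q hQs hQ using fun i j => hFV i trivial j trivial
  exact ⟨.of Q, by rwa [← Matrix.ext hQ] at hF, hQs⟩

end PolynomialAlgebra

section JointSpectrum

variable {A : Type*} [NormedCommRing A] [NormedAlgebra ℂ A] {σ : Type*}

/-- The joint spectrum of a family of elements of a commutative Banach algebra, described through
characters: the set of the families of their values. -/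
def jointSpectrum (a : σ → A) : Set (σ → ℂ) :=
  Set.range fun (χ : WeakDual.characterSpace ℂ A) i => χ (a i)

lemma eval_character (a : σ → A) (χ : WeakDual.characterSpace ℂ A) (p : MvPolynomial σ ℂ) :
    MvPolynomial.eval (fun i => χ (a i)) p = χ (MvPolynomial.aeval a p) := by
  rw [← MvPolynomial.aeval_eq_eval]
  exact DFunLike.congr_fun
    (MvPolynomial.comp_aeval a (WeakDual.CharacterSpace.toAlgHom χ)).symm p

lemma continuous_character_apply :
    Continuous fun (χ : WeakDual.characterSpace ℂ A) (x : A) => χ x :=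
  continuous_pi fun x => (WeakDual.eval_continuous x).comp continuous_subtype_val

variable [CompleteSpace A]

lemma isCompact_jointSpectrum (a : σ → A) : IsCompact (jointSpectrum a) :=
  isCompact_range (continuous_pi fun i => (continuous_apply (a i)).comp continuous_character_apply)

lemma jointSpectrum_subset_polydisc (a : σ → A) :
    jointSpectrum a ⊆ polydisc fun i => ‖a i‖ * ‖(1 : A)‖ := by
  rintro _ ⟨χ, rfl⟩ i -
  simpa using AlgHom.norm_apply_le_self_mul_norm_one (WeakDual.CharacterSpace.toAlgHom χ) (a i)

lemma polynomialHull_jointSpectrum_id_subset :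
    polynomialHull (jointSpectrum (id : A → A)) ⊆ jointSpectrum (id : A → A) := by
  intro z hz
  have hcongr (p q : MvPolynomial A ℂ)
      (hpq : MvPolynomial.aeval id p = (MvPolynomial.aeval id q : A)) :
      MvPolynomial.eval z p = MvPolynomial.eval z q := by
    rw [← sub_eq_zero, ← map_sub]
    refine norm_le_zero_iff.1 (hz (p - q) 0 ?_)
    rintro _ ⟨χ, rfl⟩
    rw [eval_character, map_sub, hpq, sub_self, map_zero, norm_zero]
  have hscalar (c : ℂ) : z (algebraMap ℂ A c) = c := by
    simpa using hcongr (MvPolynomial.X (algebraMap ℂ A c)) (MvPolynomial.C c) (by simp)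
  have hmul (x y : A) : z (x * y) = z x * z y := by
    simpa using hcongr (.X (x * y)) (.X x * .X y) (by simp)
  have hadd (x y : A) : z (x + y) = z x + z y := by
    simpa using hcongr (.X (x + y)) (.X x + .X y) (by simp)
  exact ⟨WeakDual.CharacterSpace.equivAlgHom.symm
    { toFun := z
      map_one' := by simpa using hscalar 1
      map_mul' := hmul
      map_zero' := by simpa using hscalar 0
      map_add' := hadd
      commutes' := hscalar }, rfl⟩

lemma exists_finset_extend_notMem {C : Set (A → ℂ)} (hC : IsCompact C)
    (hCA : Disjoint C (jointSpectrum id)) (S₀ : Finset A) :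
    ∃ S, S₀ ⊆ S ∧ ∀ z ∈ polynomialHull (jointSpectrum (Subtype.val : S → A)),
      Function.extend Subtype.val z 0 ∉ C := by
  obtain ⟨S, hS₀, hS⟩ := exists_finset_restrict_notMem_polynomialHull hC
    (hCA.mono_right polynomialHull_jointSpectrum_id_subset) S₀
  refine ⟨S, hS₀, fun z hz hzC => hS _ hzC ?_⟩
  have hrestrict : S.restrict (Function.extend Subtype.val z 0) = z :=
    funext fun x => Subtype.val_injective.extend_apply z 0 x
  have himage : S.restrict '' jointSpectrum (id : A → A) = jointSpectrum (Subtype.val : S → A) :=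
    (Set.range_comp _ _).symm
  rwa [hrestrict, himage]

variable {ι : Type*} [Fintype ι] [DecidableEq ι]

lemma isUnit_map_aeval {a : σ → A} {X : Set (σ → ℂ)} (hX : jointSpectrum a ⊆ X)
    {Q : Matrix ι ι (MvPolynomial σ ℂ)} (hQ : IsUnit (Q.map (polynomialRestrict X))) :
    IsUnit (Q.map (MvPolynomial.aeval a : MvPolynomial σ ℂ →ₐ[ℂ] A)) := by
  rw [Matrix.isUnit_iff_isUnit_det]
  by_contra hdet
  obtain ⟨χ, hχ⟩ := WeakDual.CharacterSpace.exists_apply_eq_zero hdet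
  let z : X := ⟨_, hX ⟨χ, rfl⟩⟩
  refine isUnit_iff_forall_det_map_ne_zero.1 hQ z ?_
  rw [← hχ]
  refine Eq.trans (congrArg Matrix.det ?_)
    (AlgHom.map_det (WeakDual.CharacterSpace.toAlgHom χ) _).symm
  ext i j
  exact (polynomialRestrict_apply _ z).trans (eval_character a χ (Q i j))

theorem exists_isUnit_eq_aeval [Finite σ] (a : σ → A) {s : Set ι}
    {Φ : Matrix ι ι C(polynomialHull (jointSpectrum a), ℂ)} (hΦ : IsUnit Φ)
    {P : Matrix ι ι (MvPolynomial σ ℂ)}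
    (hP : ∀ i, ∀ j ∈ s, polynomialRestrict _ (P i j) = Φ i j) :
    ∃ G : Matrix ι ι A, IsUnit G ∧ ∀ i, ∀ j ∈ s, G i j = MvPolynomial.aeval a (P i j) := by
  have : CompactSpace (polynomialHull (jointSpectrum a)) :=
    isCompact_iff_compactSpace.1 (isCompact_polynomialHull (isCompact_jointSpectrum a))
  obtain ⟨Q, hQ, hQP⟩ :=
    exists_isUnit_map_polynomialRestrict polynomialHull_polynomialHull_subset hΦ hP
  exact ⟨_, isUnit_map_aeval subset_polynomialHull hQ, fun i j hj =>
    congrArg (MvPolynomial.aeval a) (hQP i j hj)⟩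

end JointSpectrum

section Lin

variable {A : Type*} [NormedCommRing A] [NormedAlgebra ℂ A] [CompleteSpace A]

variable (A) in
/-- The embedding of the character space into a compact polydisc, each character being the family
of its values. -/
noncomputable def charEmbedding :
    C(WeakDual.characterSpace ℂ A, polydisc fun x : A => ‖x‖ * ‖(1 : A)‖) :=
  ⟨fun χ => ⟨fun x => χ x, jointSpectrum_subset_polydisc id ⟨χ, rfl⟩⟩,
    continuous_character_apply.subtype_mk _⟩

lemma isClosedEmbedding_charEmbedding : IsClosedEmbedding (charEmbedding A) :=
  (charEmbedding A).continuous.isClosedEmbedding fun _ _ h =>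
    WeakDual.CharacterSpace.ext fun x => congrFun (congrArg Subtype.val h) x

variable {ι : Type*} {s : Set ι}

lemma exists_extension_charEmbedding {F : Matrix ι ι A}
    {Φ : Matrix ι ι C(WeakDual.characterSpace ℂ A, ℂ)}
    (hΦF : ∀ i, ∀ j ∈ s, Φ i j = WeakDual.gelfandTransform ℂ A (F i j)) :
    ∃ Ψ : Matrix ι ι C(polydisc fun x : A => ‖x‖ * ‖(1 : A)‖, ℂ),
      (∀ i j, (Ψ i j).comp (charEmbedding A) = Φ i j) ∧
      ∀ i, ∀ j ∈ s, ∀ w, Ψ i j w = w.1 (F i j) := by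
  have hext (i j) : ∃ g : C(polydisc fun x : A => ‖x‖ * ‖(1 : A)‖, ℂ),
      g.comp (charEmbedding A) = Φ i j ∧ (j ∈ s → ∀ w, g w = w.1 (F i j)) := by
    by_cases hj : j ∈ s
    · exact ⟨⟨fun w => w.1 (F i j), (continuous_apply _).comp continuous_subtype_val⟩,
        (hΦF i j hj).symm, fun _ _ => rfl⟩
    · obtain ⟨g, hg⟩ := (Φ i j).exists_extension isClosedEmbedding_charEmbedding
      exact ⟨g, hg, fun h => (hj h).elim⟩
  choose Ψ hΨ hΨs using hext
  exact ⟨.of Ψ, hΨ, hΨs⟩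

variable [Fintype ι] [DecidableEq ι]

lemma exists_finset_isUnit_polynomialHull {F : Matrix ι ι A}
    {Φ : Matrix ι ι C(WeakDual.characterSpace ℂ A, ℂ)} (hΦ : IsUnit Φ)
    (hΦF : ∀ i, ∀ j ∈ s, Φ i j = WeakDual.gelfandTransform ℂ A (F i j)) :
    ∃ (S : Finset A) (hS : ∀ i j, F i j ∈ S)
      (Φ' : Matrix ι ι C(polynomialHull (jointSpectrum (Subtype.val : S → A)), ℂ)),
      IsUnit Φ' ∧ ∀ i, ∀ j ∈ s, ∀ z, Φ' i j z = z.1 ⟨F i j, hS i j⟩ := by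
  classical
  obtain ⟨Ψ, hΨ, hΨs⟩ := exists_extension_charEmbedding hΦF
  let C : Set (A → ℂ) := Subtype.val '' {w | (Ψ.map (· w)).det = 0}
  have hC : IsCompact C := (isClosed_eq (Continuous.matrix_det
    (continuous_matrix fun i j => (Ψ i j).continuous)) continuous_const).isCompact.image
    continuous_subtype_val
  have hCA : Disjoint C (jointSpectrum id) := by
    rw [Set.disjoint_right]
    rintro _ ⟨χ, rfl⟩ ⟨w, hw, hwχ⟩
    obtain rfl : w = charEmbedding A χ := Subtype.ext hwχ
    refine isUnit_iff_forall_det_map_ne_zero.1 hΦ χ ?_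
    rwa [← Matrix.ext hΨ]
  obtain ⟨S, hS₀, hS⟩ := exists_finset_extend_notMem hC hCA
    (Finset.univ.image fun q : ι × ι => F q.1 q.2)
  have hFS (i j) : F i j ∈ S := hS₀ (Finset.mem_image.2 ⟨(i, j), Finset.mem_univ _, rfl⟩)
  obtain ⟨ε, hε⟩ := exists_continuousMap_eq_extend (S := (S : Set A))
    (r := fun x => ‖x‖ * ‖(1 : A)‖) (fun x => by positivity)
    (polynomialHull_subset_polydisc (jointSpectrum_subset_polydisc (Subtype.val : S → A)))
  refine ⟨S, hFS, Ψ.map (·.comp ε), isUnit_iff_forall_det_map_ne_zero.2 fun z hz =>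
    hS z.1 z.2 ⟨ε z, hz, hε z⟩, fun i j hj z => (hΨs i j hj (ε z)).trans ?_⟩
  rw [hε]
  exact Subtype.val_injective.extend_apply z.1 0 (⟨F i j, hFS i j⟩ : S)

theorem exists_isUnit_eq_of_gelfandTransform {F : Matrix ι ι A}
    {Φ : Matrix ι ι C(WeakDual.characterSpace ℂ A, ℂ)} (hΦ : IsUnit Φ)
    (hΦF : ∀ i, ∀ j ∈ s, Φ i j = WeakDual.gelfandTransform ℂ A (F i j)) :
    ∃ G : Matrix ι ι A, IsUnit G ∧ ∀ i, ∀ j ∈ s, G i j = F i j := by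
  obtain ⟨S, hS, Φ', hΦ', hΦ's⟩ := exists_finset_isUnit_polynomialHull hΦ hΦF
  obtain ⟨G, hG, hGs⟩ := exists_isUnit_eq_aeval (Subtype.val : S → A) hΦ'
    (P := .of fun i j => .X ⟨F i j, hS i j⟩) (s := s) fun i j hj => by
      ext z
      simp [hΦ's i j hj]
  exact ⟨G, hG, fun i j hj => by simp [hGs i j hj]⟩

end Lin

end BanachHermite

/-- A commutative unital complex Banach algebra with contractible character space is a Hermite
ring: every left invertible `n × k` matrix (`k < n`) over `A` can be completed to an invertible
`n × n` matrix whose first `k` columns are the given ones. -/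
theorem hermite_of_contractible_characterSpace
    {A : Type*} [NormedCommRing A] [NormedAlgebra ℂ A] [CompleteSpace A]
    (hA : ContractibleSpace (WeakDual.characterSpace ℂ A))
    (n k : ℕ) (hkn : k < n)
    (F : Matrix (Fin n) (Fin k) A)
    (hF : ∃ B : Matrix (Fin k) (Fin n) A, B * F = 1) :
    ∃ G : Matrix (Fin n) (Fin n) A, IsUnit G ∧
      ∀ (i : Fin n) (j : Fin k), G i (Fin.castLE hkn.le j) = F i j := by
  obtain ⟨B, hB⟩ := hF
  let 𝒢 := WeakDual.gelfandTransform ℂ A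
  have hBF : B.map 𝒢 * F.map 𝒢 = 1 := by
    rw [← Matrix.map_mul, hB, Matrix.map_one _ (map_zero 𝒢) (map_one 𝒢)]
  obtain ⟨Φ, hΦ, hΦF⟩ :=
    BanachHermite.exists_isUnit_submatrix_eq_of_contractibleSpace hBF (Fin.castLEEmb hkn.le)
  let F' : Matrix (Fin n) (Fin n) A :=
    .of fun i => Function.extend (Fin.castLE hkn.le) (F i) 0
  have hF' (i : Fin n) (j : Fin k) : F' i (Fin.castLE hkn.le j) = F i j :=
    (Fin.castLE_injective hkn.le).extend_apply (F i) 0 j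
  obtain ⟨G, hG, hGF⟩ := BanachHermite.exists_isUnit_eq_of_gelfandTransform
    (s := Set.range (Fin.castLE hkn.le)) (F := F') hΦ <| by
      rintro i _ ⟨j, rfl⟩
      rw [hF']
      exact congrFun (congrFun hΦF i) j
  exact ⟨G, hG, fun i j => (hGF i _ ⟨j, rfl⟩).trans (hF' i j)⟩
end
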